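/- arXiv:1607.08137 — 7 statements merged into one kernel-verified Lean document; each statement's English description precedes it below -/
import Mathlib

section
/- Let r ≥ 1 and D ≥ 0 be integers and Q_0, …, Q_D ∈ ℚ[x] polynomials. Suppose the formal power series f = Σ_{d≥0} c_d q^d ∈ ℚ[[q]] satisfies (Σ_{j=0}^{D} q^j Q_j(θ)) f = 0. Then the formal power series g = Σ_{d≥0} (d!)^r c_d q^d satisfies (Σ_{j=0}^{D} q^j Q_j(θ) ∏_{m=1}^{j} (θ+m)^r) g = 0. Equivalently, at the level of coefficients: if Σ_{j=0}^{D} Q_j(d−j) c_{d−j} = 0 for all d ≥ 0 (with c_e = 0 for e < 0), then Σ_{j=0}^{D} Q_j(d−j) · (∏_{m=1}^{j}(d−j+m))^r · ((d−j)!)^r c_{d−j} = 0 for all d ≥ 0. -/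
/-- The shifted factorial `∏_{m=1}^{j} (n+m)` times `n!` is `(n+j)!`. -/
theorem prod_Icc_add_mul_factorial {R : Type*} [CommSemiring R] (n j : ℕ) :
    (∏ m ∈ Finset.Icc 1 j, ((n : R) + (m : R))) * (n.factorial : R) =
      ((n + j).factorial : R) := by
  induction j with
  | zero => simp
  | succ k ih =>
    rw [Finset.prod_Icc_succ_top (by omega), mul_right_comm, ih, ← add_assoc,
      Nat.factorial_succ]
    push_cast
    ring

/-- hypergeometric modification / quantum Lefschetz lemma of
Batyrev–van Straten, coefficient form.  If the coefficients `c` of a formal power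
series `f = Σ c_d q^d` satisfy the recursion coming from the differential operator
`Σ_{j=0}^{D} q^j Q_j(θ)`, then the coefficients `(d!)^r c_d` of the modified series
satisfy the recursion coming from `Σ_{j=0}^{D} q^j Q_j(θ) ∏_{m=1}^{j} (θ+m)^r`. -/
theorem stmt_0 (r D : ℕ) (hr : 1 ≤ r) (Q : ℕ → Polynomial ℚ) (c : ℤ → ℚ)
    (hc : ∀ e : ℤ, e < 0 → c e = 0)
    (h : ∀ d : ℤ, 0 ≤ d →
      ∑ j ∈ Finset.range (D + 1), (Q j).eval ((d : ℚ) - (j : ℚ)) * c (d - j) = 0) :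
    ∀ d : ℤ, 0 ≤ d →
      ∑ j ∈ Finset.range (D + 1),
        (Q j).eval ((d : ℚ) - (j : ℚ)) *
          (∏ m ∈ Finset.Icc 1 j, ((d : ℚ) - (j : ℚ) + (m : ℚ))) ^ r *
          (((d - (j : ℤ)).toNat.factorial : ℚ)) ^ r * c (d - j) = 0 := by
  intro d hd
  rw [← mul_zero ((d.toNat.factorial : ℚ) ^ r), ← h d hd, Finset.mul_sum]
  refine Finset.sum_congr rfl fun j _ => ?_
  rcases lt_or_ge (d - (j : ℤ)) 0 with hneg | hnonneg
  · simp [hc _ hneg]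
  · obtain ⟨n, hn⟩ := Int.eq_ofNat_of_zero_le hnonneg
    have hdn : d = ((n + j : ℕ) : ℤ) := by push_cast; omega
    have hq : (d : ℚ) - (j : ℚ) = (n : ℚ) := by rw [hdn]; push_cast; ring
    have hfac : (d.toNat.factorial : ℚ) =
        (∏ m ∈ Finset.Icc 1 j, ((n : ℚ) + (m : ℚ))) * (n.factorial : ℚ) := by
      rw [prod_Icc_add_mul_factorial, hdn, Int.toNat_natCast]
    rw [hfac, hq, hn, Int.toNat_natCast, mul_pow]
    ring
end

section
/- Let M(q) be the 8×8 matrix over ℚ[q] whose rows (indexed 0,…,7) are: row 0 = (0, 4q, 0, 0, 72q², 40q², 0, 396q³); row 1 = (1, 0, 9q, 5q, 0, 0, 132q², 0); row 2 = (0, 1, 0, 0, 8q, 4q, 0, 0); row 3 = (0, 0, 0, 0, 6q, 4q, 0, 132q²); row 4 = (0, 0, 1, 0, 0, 0, 0, 0); row 5 = (0, 0, 0, 1, 0, 0, (33/2)q, 0); row 6 = (0, 0, 0, 0, 1, 6/11, 0, 4q); row 7 = (0, 0, 0, 0, 0, 0, 1, 0). Suppose s_0, …, s_7 ∈ ℚ[[q]]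 satisfy the system θ s_i = Σ_{j=0}^{7} M(q)_{ij} s_j for all i. Then (Σ_{i=0}^{6} q^i Q_i(θ)) s_7 = 0, where Q_0 = 242(θ−1)²θ⁶; Q_1 = −11θ²(1615θ⁶ − 4845θ⁵ + 4598θ⁴ + 1640θ³ + 1370θ² + 550θ + 88); Q_2 = 103968θ⁸ − 415872θ⁷ + 1108270θ⁶ + 662150θ⁵ + 2273θ⁴ − 230318θ³ − 24299θ² + 61468θ + 19360; Q_3 = −3950784θ⁶ + 4345395θ⁴ + 1309385θ³ − 2484702θ² − 1988272θ − 440880; Q_4 = 4(233928θ⁴ + 467856θ³ + 664544θ² + 587366θ + 156697); Q_5 = −1216(1368θ² + 2736θ − 479); Q_6 = −6653952. -/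
noncomputable section
namespace Stmt1

open PowerSeries

/-- The Euler operator `θ = q·d/dq` on `ℚ[[q]]`. -/
def th (f : PowerSeries ℚ) : PowerSeries ℚ :=
  PowerSeries.mk fun d => (d : ℚ) * PowerSeries.coeff d f

/-- The connection matrix `M(q)` of the `E′`-twisted quantum connection on `G(3,7)`,
`E′ = Λ²S* ⊕ Λ³Q`, in the basis `1, s₁, s₁², s₂, s₁³, s₁s₂, s₁⁴, s₁⁵`. -/
def M : Matrix (Fin 8) (Fin 8) (PowerSeries ℚ) :=
  !![0, 4 * X, 0, 0, 72 * X ^ 2, 40 * X ^ 2, 0, 396 * X ^ 3;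
     1, 0, 9 * X, 5 * X, 0, 0, 132 * X ^ 2, 0;
     0, 1, 0, 0, 8 * X, 4 * X, 0, 0;
     0, 0, 0, 0, 6 * X, 4 * X, 0, 132 * X ^ 2;
     0, 0, 1, 0, 0, 0, 0, 0;
     0, 0, 0, 1, 0, 0, C (33 / 2 : ℚ) * X, 0;
     0, 0, 0, 0, 1, C (6 / 11 : ℚ), 0, 4 * X;
     0, 0, 0, 0, 0, 0, 1, 0]

/-- `Q₀(θ) = 242(θ−1)²θ⁶` applied to a power series. -/
def Q0op (f : PowerSeries ℚ) : PowerSeries ℚ :=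
  242 * ((fun g => th g - g) ((fun g => th g - g) (th^[6] f)))

/-- `Q₁(θ) = −11θ²(1615θ⁶ − 4845θ⁵ + 4598θ⁴ + 1640θ³ + 1370θ² + 550θ + 88)` applied. -/
def Q1op (f : PowerSeries ℚ) : PowerSeries ℚ :=
  -11 * th (th (1615 * th^[6] f - 4845 * th^[5] f + 4598 * th^[4] f + 1640 * th^[3] f +
    1370 * th^[2] f + 550 * th f + 88 * f))

/-- `Q₂(θ)` applied. -/
def Q2op (f : PowerSeries ℚ) : PowerSeries ℚ :=
  103968 * th^[8] f - 415872 * th^[7] f + 1108270 * th^[6] f + 662150 * th^[5] f +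
    2273 * th^[4] f - 230318 * th^[3] f - 24299 * th^[2] f + 61468 * th f + 19360 * f

/-- `Q₃(θ)` applied. -/
def Q3op (f : PowerSeries ℚ) : PowerSeries ℚ :=
  -3950784 * th^[6] f + 4345395 * th^[4] f + 1309385 * th^[3] f - 2484702 * th^[2] f -
    1988272 * th f - 440880 * f

/-- `Q₄(θ)` applied. -/
def Q4op (f : PowerSeries ℚ) : PowerSeries ℚ :=
  4 * (233928 * th^[4] f + 467856 * th^[3] f + 664544 * th^[2] f + 587366 * th f + 156697 * f)

/-- `Q₅(θ)` applied. -/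
def Q5op (f : PowerSeries ℚ) : PowerSeries ℚ :=
  -1216 * (1368 * th^[2] f + 2736 * th f - 479 * f)

/-- `Q₆(θ)` applied. -/
def Q6op (f : PowerSeries ℚ) : PowerSeries ℚ := -6653952 * f

theorem th_eq_X_mul_derivative (f : PowerSeries ℚ) : th f = X * derivative ℚ f := by
  ext (_ | d)
  · simp [th]
  · simp [th, coeff_succ_X_mul, coeff_derivative, mul_comm]

theorem th_add (f g : PowerSeries ℚ) : th (f + g) = th f + th g := by
  simp only [th_eq_X_mul_derivative, map_add, mul_add]

theorem th_sub (f g : PowerSeries ℚ) : th (f - g) = th f - th g := by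
  simp only [th_eq_X_mul_derivative, map_sub, mul_sub]

theorem th_mul (f g : PowerSeries ℚ) : th (f * g) = th f * g + f * th g := by
  simp only [th_eq_X_mul_derivative, Derivation.leibniz, smul_eq_mul]
  ring

theorem th_ofNat (n : ℕ) [n.AtLeastTwo] : th (ofNat(n) : PowerSeries ℚ) = 0 := by
  rw [th_eq_X_mul_derivative, ← Nat.cast_ofNat, Derivation.map_natCast, mul_zero]

theorem th_X : th X = X := by
  simp [th_eq_X_mul_derivative]

theorem th_X_pow (n : ℕ) : th (X ^ n) = (n : PowerSeries ℚ) * X ^ n := by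
  ext d
  simp only [th, coeff_mk, coeff_X_pow, ← map_natCast (C (R := ℚ)), coeff_C_mul]
  split_ifs with h <;> simp [h]

/-- if `s₀, …, s₇ ∈ ℚ[[q]]` satisfy `θ sᵢ = Σ_j M(q)_{ij} s_j`, then the
quantum differential operator `Σ_{i=0}^{6} qⁱ Qᵢ(θ)` annihilates `s₇`. -/
theorem stmt_1 (s : Fin 8 → PowerSeries ℚ)
    (hs : ∀ i : Fin 8, th (s i) = ∑ j : Fin 8, M i j * s j) :
    Q0op (s 7) + X * Q1op (s 7) + X ^ 2 * Q2op (s 7) + X ^ 3 * Q3op (s 7) +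
      X ^ 4 * Q4op (s 7) + X ^ 5 * Q5op (s 7) + X ^ 6 * Q6op (s 7) = 0 := by
  have e0 : th (s 0) = 4 * X * s 1 + 72 * X ^ 2 * s 4 + 40 * X ^ 2 * s 5 + 396 * X ^ 3 * s 7 := by
    simpa [M, Fin.sum_univ_eight] using hs 0
  have e1 : th (s 1) = s 0 + 9 * X * s 2 + 5 * X * s 3 + 132 * X ^ 2 * s 6 := by
    simpa [M, Fin.sum_univ_eight] using hs 1
  have e2 : th (s 2) = s 1 + 8 * X * s 4 + 4 * X * s 5 := by
    simpa [M, Fin.sum_univ_eight] using hs 2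
  have e3 : th (s 3) = 6 * X * s 4 + 4 * X * s 5 + 132 * X ^ 2 * s 7 := by
    simpa [M, Fin.sum_univ_eight] using hs 3
  have e4 : th (s 4) = s 2 := by
    simpa [M, Fin.sum_univ_eight] using hs 4
  have e5 : 2 * th (s 5) = 2 * s 3 + 33 * X * s 6 := by
    have h : th (s 5) = s 3 + C (33 / 2 : ℚ) * X * s 6 := by
      simpa [M, Fin.sum_univ_eight] using hs 5
    have hc : (2 : PowerSeries ℚ) * C (33 / 2 : ℚ) = 33 := by
      rw [← map_ofNat (C (R := ℚ)) 2, ← map_mul, ← map_ofNat (C (R := ℚ)) 33]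
      norm_num
    linear_combination 2 * h + X * s 6 * hc
  have e6 : 11 * th (s 6) = 11 * s 4 + 6 * s 5 + 44 * X * s 7 := by
    have h : th (s 6) = s 4 + C (6 / 11 : ℚ) * s 5 + 4 * X * s 7 := by
      simpa [M, Fin.sum_univ_eight] using hs 6
    have hc : (11 : PowerSeries ℚ) * C (6 / 11 : ℚ) = 6 := by
      rw [← map_ofNat (C (R := ℚ)) 11, ← map_mul, ← map_ofNat (C (R := ℚ)) 6]
      norm_num
    linear_combination 11 * h + s 5 * hc
  have e7 : th (s 7) = s 6 := by
    simpa [M, Fin.sum_univ_eight] using hs 7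
  have h2 : 11 * th^[2] (s 7) = 11 * s 4 + 6 * s 5 + 44 * X * s 7 := by
    simp only [Function.iterate_succ', Function.iterate_zero, Function.comp_apply, id_eq, e7]
    linear_combination e6
  have h3 : 11 * th^[3] (s 7) = 11 * s 2 + 6 * s 3 + 143 * X * s 6 + 44 * X * s 7 := by
    have h := congrArg th h2
    simp only [th_add, th_mul, th_X, th_ofNat, ← Function.iterate_succ_apply' th] at h
    linear_combination h + 11 * e4 + 3 * e5 + 44 * X * e7
  have h4 : 11 * th^[4] (s 7) = 11 * s 1 + 267 * X * s 4 + 146 * X * s 5 + 187 * X * s 6 + (44 *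
      X + 1364 * X ^ 2) * s 7 := by
    have h := congrArg th h3
    simp only [th_add, th_mul, th_X, th_ofNat, ← Function.iterate_succ_apply' th] at h
    linear_combination h + 11 * e2 + 6 * e3 + 13 * X * e6 + 44 * X * e7
  have h5 : 11 * th^[5] (s 7) = 11 * s 0 + 366 * X * s 2 + 201 * X * s 3 + 454 * X * s 4 + 248 *
      X * s 5 + (231 * X + 5225 * X ^ 2) * s 6 + (44 * X + 3476 * X ^ 2) * s 7 := by
    have h := congrArg th h4
    simp only [th_add, th_mul, th_X_pow, th_X, th_ofNat, ← Function.iterate_succ_apply' th] at h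
    linear_combination h + 11 * e1 + 267 * X * e4 + 73 * X * e5 + 17 * X * e6 + (44 * X + 1364 *
      X ^ 2) * e7
  have h6 : 11 * th^[6] (s 7) = 410 * X * s 1 + 820 * X * s 2 + 449 * X * s 3 + (685 * X + 10151
      * X ^ 2) * s 4 + (374 * X + 5558 * X ^ 2) * s 5 + (275 * X + 18018 * X ^ 2) * s 6 + (44 *
      X + 7876 * X ^ 2 + 51788 * X ^ 3) * s 7 := by
    have h := congrArg th h5
    simp only [th_add, th_mul, th_X_pow, th_X, th_ofNat, ← Function.iterate_succ_apply' th] at h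
    linear_combination h + 11 * e0 + 366 * X * e2 + 201 * X * e3 + 454 * X * e4 + 124 * X * e5 +
      (21 * X + 475 * X ^ 2) * e6 + (44 * X + 3476 * X ^ 2) * e7
  have h7 : 11 * th^[7] (s 7) = 410 * X * s 0 + 1230 * X * s 1 + (1505 * X + 13841 * X ^ 2) *
      s 2 + (823 * X + 7608 * X ^ 2) * s 3 + (960 * X + 47574 * X ^ 2) * s 4 + (524 * X + 26020 *
      X ^ 2) * s 5 + (319 * X + 50083 * X ^ 2 + 197615 * X ^ 3) * s 6 + (44 * X + 16852 * X ^ 2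
      + 286704 * X ^ 3) * s 7 := by
    have h := congrArg th h6
    simp only [th_add, th_mul, th_X_pow, th_X, th_ofNat, ← Function.iterate_succ_apply' th] at h
    linear_combination h + 410 * X * e1 + 820 * X * e2 + 449 * X * e3 + (685 * X + 10151 *
      X ^ 2) * e4 + (187 * X + 2779 * X ^ 2) * e5 + (25 * X + 1638 * X ^ 2) * e6 + (44 * X + 7876 *
      X ^ 2 + 51788 * X ^ 3) * e7
  have h8 : 11 * th^[8] (s 7) = 1640 * X * s 0 + (2735 * X + 15481 * X ^ 2) * s 1 + (2465 * X +
      86326 * X ^ 2) * s 2 + (1347 * X + 47386 * X ^ 2) * s 3 + (1279 * X + 162209 * X ^ 2 +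
      383511 * X ^ 3) * s 4 + (698 * X + 88670 * X ^ 2 + 209986 * X ^ 3) * s 5 + (363 * X +
      125664 * X ^ 2 + 1471239 * X ^ 3) * s 6 + (44 * X + 34980 * X ^ 2 + 1169080 * X ^ 3 +
      1957076 * X ^ 4) * s 7 := by
    have h := congrArg th h7
    simp only [th_add, th_mul, th_X_pow, th_X, th_ofNat, ← Function.iterate_succ_apply' th] at h
    linear_combination h + 410 * X * e0 + 1230 * X * e1 + (1505 * X + 13841 * X ^ 2) * e2 + (823
      * X + 7608 * X ^ 2) * e3 + (960 * X + 47574 * X ^ 2) * e4 + (262 * X + 13010 * X ^ 2) * e5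
      + (29 * X + 4553 * X ^ 2 + 17965 * X ^ 3) * e6 + (44 * X + 16852 * X ^ 2 + 286704 * X ^ 3)
      * e7
  have : CharZero (PowerSeries ℚ) := algebraRat.charZero _
  refine (mul_eq_zero_iff_left (OfNat.ofNat_ne_zero 11 : (11 : PowerSeries ℚ) ≠ 0)).mp ?_
  simp only [Q0op, Q1op, Q2op, Q3op, Q4op, Q5op, Q6op, th_add, th_sub, th_mul, th_ofNat,
    zero_mul, zero_add, Function.iterate_succ_apply', Function.iterate_zero_apply]
    at h2 h3 h4 h5 h6 h7 h8 ⊢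
  linear_combination (242 - 17765 * X + 103968 * X ^ 2) * h8 + (-484 +
    53295 * X - 415872 * X ^ 2) * h7 + (242 - 50578 * X + 1108270 * X ^ 2 -
    3950784 * X ^ 3) * h6 + (-18040 * X + 662150 * X ^ 2) * h5 + (-15070 * X + 2273 *
    X ^ 2 + 4345395 * X ^ 3 + 935712 * X ^ 4) * h4 + (-6050 * X - 230318 * X ^ 2 + 1309385 *
    X ^ 3 + 1871424 * X ^ 4) * h3 + (-968 * X - 24299 * X ^ 2 - 2484702 * X ^ 3 + 2658176
    * X ^ 4 - 1663488 * X ^ 5) * h2 + (676148 * X ^ 2 - 21870992 * X ^ 3 + 25844104 * X ^ 4 -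
    36596736 * X ^ 5) * e7

end Stmt1
end
end

section
/- Set Q_0 = 242(θ−1)²θ⁶; Q_1 = −11θ²(1615θ⁶ − 4845θ⁵ + 4598θ⁴ + 1640θ³ + 1370θ² + 550θ + 88); Q_2 = 103968θ⁸ − 415872θ⁷ + 1108270θ⁶ + 662150θ⁵ + 2273θ⁴ − 230318θ³ − 24299θ² + 61468θ + 19360; Q_3 = −3950784θ⁶ + 4345395θ⁴ + 1309385θ³ − 2484702θ² − 1988272θ − 440880; Q_4 = 4(233928θ⁴ + 467856θ³ + 664544θ² + 587366θ + 156697); Q_5 = −1216(1368θ² + 2736θ − 479); Q_6 = −6653952, and P(q,θ) = Σ_{d=0}^{6} q^d Q_d(θ) ∏_{m=1}^{d}(θ+m)². Let r(q) = 32768q⁵ − 225280q⁴ + 619520q³ − 851840q² + 585640q − 161051 (invertible in ℚ[[q]] since r(0) = −161051 ≠ 0), R_4(q,θ) = 103968q²(8q−11)³θ⁴ − 415872q²(8q−11)²(20q−11)θ³ + 19q(8q−11)(12957696q³ − 11215424q² + 2923360q − 113135)θ² − 57q(56033280q⁴ − 48468992q³ + 5056832q² − 3620320q + 1244485)θ +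 2(958169088q⁵ + 892286208q⁴ − 67694176q³ − 91902888q² + 27891105q − 161051), and S_4(q,θ) = 121θ⁴ − 11q(434θ⁴+820θ³+685θ²+275θ+44) + q²(7841θ⁴+10916θ³+3133θ²−2486θ−1320) − 4q³(1488θ⁴+4092θ³+6761θ²+5511θ+1694) − 32q⁴(136θ⁴+1460θ³+4556θ²+5245θ+2017) + 256q⁵(θ+1)²(40θ²+212θ+237) − 4096q⁶(θ+1)²(θ+2)². Then for every f ∈ ℚ[[q]] one has P(q,θ) f = θ²((θ−1)²(r(q)^{−1} · R_4(q,θ)(S_4(q,θ) f))), i.e. P factors as the composition θ² ∘ (θ−1)² ∘ (multiplication by r(q)^{−1}) ∘ R_4 ∘ S_4 of operators on ℚ[[q]]. -/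
noncomputable section
namespace Stmt2

open PowerSeries

/-- The Euler operator `θ = q·d/dq` on `ℚ[[q]]`. -/
def th (f : PowerSeries ℚ) : PowerSeries ℚ :=
  PowerSeries.mk fun d => (d : ℚ) * PowerSeries.coeff d f

/-- `(θ + m)` applied to a power series, for a rational constant `m`. -/
def sh (m : ℚ) (f : PowerSeries ℚ) : PowerSeries ℚ := th f + C m * f

/-- `∏_{m=1}^{d} (θ+m)²` applied to a power series. -/
def prodOp : ℕ → PowerSeries ℚ → PowerSeries ℚ
  | 0, f => f
  | (n + 1), f => sh ((n : ℚ) + 1) (sh ((n : ℚ) + 1) (prodOp n f))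

/-- `Q₀(θ) = 242(θ−1)²θ⁶` applied. -/
def Q0op (f : PowerSeries ℚ) : PowerSeries ℚ :=
  242 * ((fun g => th g - g) ((fun g => th g - g) (th^[6] f)))

/-- `Q₁(θ) = −11θ²(1615θ⁶ − 4845θ⁵ + 4598θ⁴ + 1640θ³ + 1370θ² + 550θ + 88)` applied. -/
def Q1op (f : PowerSeries ℚ) : PowerSeries ℚ :=
  -11 * th (th (1615 * th^[6] f - 4845 * th^[5] f + 4598 * th^[4] f + 1640 * th^[3] f +
    1370 * th^[2] f + 550 * th f + 88 * f))

/-- `Q₂(θ)` applied. -/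
def Q2op (f : PowerSeries ℚ) : PowerSeries ℚ :=
  103968 * th^[8] f - 415872 * th^[7] f + 1108270 * th^[6] f + 662150 * th^[5] f +
    2273 * th^[4] f - 230318 * th^[3] f - 24299 * th^[2] f + 61468 * th f + 19360 * f

/-- `Q₃(θ)` applied. -/
def Q3op (f : PowerSeries ℚ) : PowerSeries ℚ :=
  -3950784 * th^[6] f + 4345395 * th^[4] f + 1309385 * th^[3] f - 2484702 * th^[2] f -
    1988272 * th f - 440880 * f

/-- `Q₄(θ)` applied. -/
def Q4op (f : PowerSeries ℚ) : PowerSeries ℚ :=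
  4 * (233928 * th^[4] f + 467856 * th^[3] f + 664544 * th^[2] f + 587366 * th f + 156697 * f)

/-- `Q₅(θ)` applied. -/
def Q5op (f : PowerSeries ℚ) : PowerSeries ℚ :=
  -1216 * (1368 * th^[2] f + 2736 * th f - 479 * f)

/-- `Q₆(θ)` applied. -/
def Q6op (f : PowerSeries ℚ) : PowerSeries ℚ := -6653952 * f

/-- `P(q,θ) = Σ_{d=0}^{6} q^d Q_d(θ) ∏_{m=1}^{d}(θ+m)²` applied. -/
def Pop (f : PowerSeries ℚ) : PowerSeries ℚ :=
  Q0op (prodOp 0 f) + X * Q1op (prodOp 1 f) + X ^ 2 * Q2op (prodOp 2 f) +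
    X ^ 3 * Q3op (prodOp 3 f) + X ^ 4 * Q4op (prodOp 4 f) + X ^ 5 * Q5op (prodOp 5 f) +
    X ^ 6 * Q6op (prodOp 6 f)

/-- `r(q) = 32768q⁵ − 225280q⁴ + 619520q³ − 851840q² + 585640q − 161051`. -/
def rq : PowerSeries ℚ :=
  32768 * X ^ 5 - 225280 * X ^ 4 + 619520 * X ^ 3 - 851840 * X ^ 2 + 585640 * X - 161051

/-- `R₄(q,θ)` applied. -/
def R4op (f : PowerSeries ℚ) : PowerSeries ℚ :=
  103968 * X ^ 2 * (8 * X - 11) ^ 3 * th^[4] f -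
    415872 * X ^ 2 * (8 * X - 11) ^ 2 * (20 * X - 11) * th^[3] f +
    19 * X * (8 * X - 11) *
      (12957696 * X ^ 3 - 11215424 * X ^ 2 + 2923360 * X - 113135) * th^[2] f -
    57 * X * (56033280 * X ^ 4 - 48468992 * X ^ 3 + 5056832 * X ^ 2 - 3620320 * X + 1244485) *
      th f +
    2 * (958169088 * X ^ 5 + 892286208 * X ^ 4 - 67694176 * X ^ 3 - 91902888 * X ^ 2 +
      27891105 * X - 161051) * f

/-- `S₄(q,θ)` (the Picard–Fuchs operator of Calabi–Yau No. 25) applied. -/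
def S4op (f : PowerSeries ℚ) : PowerSeries ℚ :=
  121 * th^[4] f -
    11 * X * (434 * th^[4] f + 820 * th^[3] f + 685 * th^[2] f + 275 * th f + 44 * f) +
    X ^ 2 * (7841 * th^[4] f + 10916 * th^[3] f + 3133 * th^[2] f - 2486 * th f - 1320 * f) -
    4 * X ^ 3 * (1488 * th^[4] f + 4092 * th^[3] f + 6761 * th^[2] f + 5511 * th f + 1694 * f) -
    32 * X ^ 4 * (136 * th^[4] f + 1460 * th^[3] f + 4556 * th^[2] f + 5245 * th f + 2017 * f) +
    256 * X ^ 5 * (sh 1 (sh 1 (40 * th^[2] f + 212 * th f + 237 * f))) -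
    4096 * X ^ 6 * (sh 1 (sh 1 (sh 2 (sh 2 f))))

theorem th_eq_X_mul_derivative (f : PowerSeries ℚ) : th f = X * derivative ℚ f := by
  ext n
  cases n with
  | zero => simp [th]
  | succ n => simp [th, coeff_succ_X_mul, coeff_derivative, mul_comm]

theorem th_add (f g : PowerSeries ℚ) : th (f + g) = th f + th g := by
  simp only [th_eq_X_mul_derivative, map_add]; ring

theorem th_sub (f g : PowerSeries ℚ) : th (f - g) = th f - th g := by
  simp only [th_eq_X_mul_derivative, map_sub]; ring

theorem th_neg (f : PowerSeries ℚ) : th (-f) = -th f := by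
  simp only [th_eq_X_mul_derivative, map_neg]; ring

theorem th_mul (f g : PowerSeries ℚ) : th (f * g) = f * th g + g * th f := by
  simp only [th_eq_X_mul_derivative, Derivation.leibniz, smul_eq_mul]; ring

theorem th_X : th X = X := by
  simp [th_eq_X_mul_derivative]

theorem th_pow (f : PowerSeries ℚ) (n : ℕ) : th (f ^ n) = n * f ^ (n - 1) * th f := by
  simp only [th_eq_X_mul_derivative, Derivation.leibniz_pow, smul_eq_mul, nsmul_eq_mul]; ring

theorem th_X_pow_mul (n : ℕ) (g : PowerSeries ℚ) :
    th (X ^ n * g) = X ^ n * (th g + (n : PowerSeries ℚ) * g) := by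
  cases n with
  | zero => simp
  | succ n => rw [th_mul, th_pow, th_X, Nat.add_sub_cancel]; push_cast; ring

theorem th_X_mul (g : PowerSeries ℚ) : th (X * g) = X * (th g + g) := by
  rw [th_mul, th_X]; ring

theorem th_ofNat_mul (n : ℕ) [n.AtLeastTwo] (g : PowerSeries ℚ) :
    th ((ofNat(n) : PowerSeries ℚ) * g) = ofNat(n) * th g := by
  ext d
  rw [← map_ofNat (C (R := ℚ)) n]
  simp only [th, coeff_mk, coeff_C_mul]; ring

theorem sh_ofNat (n : ℕ) [n.AtLeastTwo] (f : PowerSeries ℚ) :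
    sh ofNat(n) f = th f + ofNat(n) * f := by
  rw [sh, map_ofNat]

theorem sh_one (f : PowerSeries ℚ) : sh 1 f = th f + f := by
  rw [sh, map_one, one_mul]

/-- The quotient of `P(q,θ)` by the left factor `θ²(θ−1)²`, applied. -/
def quotOp (f : PowerSeries ℚ) : PowerSeries ℚ :=
  242 * th^[4] f -
    X * (11 * (1615 * th^[6] f - 4845 * th^[5] f + 4598 * th^[4] f + 1640 * th^[3] f +
      1370 * th^[2] f + 550 * th f + 88 * f)) +
    X ^ 2 * Q2op f + X ^ 3 * Q3op (prodOp 1 f) + X ^ 4 * Q4op (prodOp 2 f) +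
    X ^ 5 * Q5op (prodOp 3 f) + X ^ 6 * Q6op (prodOp 4 f)

theorem rq_eq : rq = (8 * X - 11) ^ 5 := by
  rw [rq]; ring

theorem constantCoeff_rq_ne_zero : constantCoeff rq ≠ 0 := by
  have h : constantCoeff (11 : PowerSeries ℚ) = 11 := map_ofNat _ 11
  rw [rq_eq]
  simp [h]

set_option maxHeartbeats 4000000 in
theorem Pop_eq_quotOp (f : PowerSeries ℚ) :
    Pop f = th (th ((fun g => th g - g) ((fun g => th g - g) (quotOp f)))) := by
  simp only [Pop, quotOp, Q0op, Q1op, Q2op, Q3op, Q4op, Q5op, Q6op, prodOp,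
    Function.iterate_succ, Function.iterate_zero, Function.comp_apply, id_eq]
  norm_num only [sh_one, sh_ofNat]
  simp only [neg_mul, th_add, th_sub, th_neg, th_X_mul, th_X_pow_mul,
    th_ofNat_mul, Nat.cast_ofNat]
  ring

set_option maxHeartbeats 4000000 in
theorem rq_mul_quotOp (f : PowerSeries ℚ) : rq * quotOp f = R4op (S4op f) := by
  simp only [rq, R4op, S4op, quotOp, Q2op, Q3op, Q4op, Q5op, Q6op, prodOp,
    Function.iterate_succ, Function.iterate_zero, Function.comp_apply, id_eq]
  norm_num only [sh_one, sh_ofNat]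
  simp only [neg_mul, mul_assoc, th_add, th_sub, th_X_mul, th_X_pow_mul,
    th_ofNat_mul, Nat.cast_ofNat]
  ring

/-- the order-12 operator `P(q,θ)` factors as
`θ² ∘ (θ−1)² ∘ (r(q)⁻¹ ·) ∘ R₄(q,θ) ∘ S₄(q,θ)` on `ℚ[[q]]`. -/
theorem stmt_2 (f : PowerSeries ℚ) :
    Pop f =
      th (th ((fun g => th g - g) ((fun g => th g - g) (rq⁻¹ * R4op (S4op f))))) := by
  rw [← rq_mul_quotOp, ← mul_assoc, PowerSeries.inv_mul_cancel _ constantCoeff_rq_ne_zero, one_mul,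
    Pop_eq_quotOp]

end Stmt2
end
end

section
/- Let M(q) be the 8×8 matrix over ℚ[q] with rows (indexed 0,…,7): row 0 = (0, 4q, 0, 0, 72q², 40q², 0, 396q³); row 1 = (1, 0, 9q, 5q, 0, 0, 132q², 0); row 2 = (0, 1, 0, 0, 8q, 4q, 0, 0); row 3 = (0, 0, 0, 0, 6q, 4q, 0, 132q²); row 4 = (0, 0, 1, 0, 0, 0, 0, 0); row 5 = (0, 0, 0, 1, 0, 0, (33/2)q, 0); row 6 = (0, 0, 0, 0, 1, 6/11, 0, 4q); row 7 = (0, 0, 0, 0, 0, 0, 1, 0). Suppose s_0, …, s_7 ∈ ℚ[[q]] satisfy θ s_i = Σ_{j=0}^{7} M(q)_{ij} s_j for all i, and write s_7 = Σ_{d≥0} c_d q^d. Then the series g = Σ_{d≥0} (d!)² c_d q^d satisfies P(q,θ) g = 0, where P(q,θ) = Σ_{d=0}^{6} q^d Q_d(θ) ∏_{m=1}^{d}(θ+m)² with Q_0 = 242(θ−1)²θ⁶; Q_1 = −11θ²(1615θ⁶ − 4845θ⁵ + 4598θ⁴ + 1640θ³ + 1370θ² + 550θ + 88); Q_2 = 103968θ⁸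 − 415872θ⁷ + 1108270θ⁶ + 662150θ⁵ + 2273θ⁴ − 230318θ³ − 24299θ² + 61468θ + 19360; Q_3 = −3950784θ⁶ + 4345395θ⁴ + 1309385θ³ − 2484702θ² − 1988272θ − 440880; Q_4 = 4(233928θ⁴ + 467856θ³ + 664544θ² + 587366θ + 156697); Q_5 = −1216(1368θ² + 2736θ − 479); Q_6 = −6653952. -/
noncomputable section
namespace Stmt3

open PowerSeries

/-- The Euler operator `θ = q·d/dq` on `ℚ[[q]]`. -/
def th (f : PowerSeries ℚ) : PowerSeries ℚ :=
  PowerSeries.mk fun d => (d : ℚ) * PowerSeries.coeff d f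

/-- The connection matrix `M(q)` of the `E′`-twisted quantum connection on `G(3,7)`,
`E′ = Λ²S* ⊕ Λ³Q`, in the basis `1, s₁, s₁², s₂, s₁³, s₁s₂, s₁⁴, s₁⁵`. -/
def M : Matrix (Fin 8) (Fin 8) (PowerSeries ℚ) :=
  !![0, 4 * X, 0, 0, 72 * X ^ 2, 40 * X ^ 2, 0, 396 * X ^ 3;
     1, 0, 9 * X, 5 * X, 0, 0, 132 * X ^ 2, 0;
     0, 1, 0, 0, 8 * X, 4 * X, 0, 0;
     0, 0, 0, 0, 6 * X, 4 * X, 0, 132 * X ^ 2;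
     0, 0, 1, 0, 0, 0, 0, 0;
     0, 0, 0, 1, 0, 0, C (33 / 2 : ℚ) * X, 0;
     0, 0, 0, 0, 1, C (6 / 11 : ℚ), 0, 4 * X;
     0, 0, 0, 0, 0, 0, 1, 0]

/-- `(θ + m)` applied to a power series, for a rational constant `m`. -/
def sh (m : ℚ) (f : PowerSeries ℚ) : PowerSeries ℚ := th f + C m * f

/-- `∏_{m=1}^{d} (θ+m)²` applied to a power series. -/
def prodOp : ℕ → PowerSeries ℚ → PowerSeries ℚ
  | 0, f => f
  | (n + 1), f => sh ((n : ℚ) + 1) (sh ((n : ℚ) + 1) (prodOp n f))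

/-- `Q₀(θ) = 242(θ−1)²θ⁶` applied. -/
def Q0op (f : PowerSeries ℚ) : PowerSeries ℚ :=
  242 * ((fun g => th g - g) ((fun g => th g - g) (th^[6] f)))

/-- `Q₁(θ) = −11θ²(1615θ⁶ − 4845θ⁵ + 4598θ⁴ + 1640θ³ + 1370θ² + 550θ + 88)` applied. -/
def Q1op (f : PowerSeries ℚ) : PowerSeries ℚ :=
  -11 * th (th (1615 * th^[6] f - 4845 * th^[5] f + 4598 * th^[4] f + 1640 * th^[3] f +
    1370 * th^[2] f + 550 * th f + 88 * f))

/-- `Q₂(θ)` applied. -/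
def Q2op (f : PowerSeries ℚ) : PowerSeries ℚ :=
  103968 * th^[8] f - 415872 * th^[7] f + 1108270 * th^[6] f + 662150 * th^[5] f +
    2273 * th^[4] f - 230318 * th^[3] f - 24299 * th^[2] f + 61468 * th f + 19360 * f

/-- `Q₃(θ)` applied. -/
def Q3op (f : PowerSeries ℚ) : PowerSeries ℚ :=
  -3950784 * th^[6] f + 4345395 * th^[4] f + 1309385 * th^[3] f - 2484702 * th^[2] f -
    1988272 * th f - 440880 * f

/-- `Q₄(θ)` applied. -/
def Q4op (f : PowerSeries ℚ) : PowerSeries ℚ :=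
  4 * (233928 * th^[4] f + 467856 * th^[3] f + 664544 * th^[2] f + 587366 * th f + 156697 * f)

/-- `Q₅(θ)` applied. -/
def Q5op (f : PowerSeries ℚ) : PowerSeries ℚ :=
  -1216 * (1368 * th^[2] f + 2736 * th f - 479 * f)

/-- `Q₆(θ)` applied. -/
def Q6op (f : PowerSeries ℚ) : PowerSeries ℚ := -6653952 * f

/-- `P(q,θ) = Σ_{d=0}^{6} q^d Q_d(θ) ∏_{m=1}^{d}(θ+m)²` applied. -/
def Pop (f : PowerSeries ℚ) : PowerSeries ℚ :=
  Q0op (prodOp 0 f) + X * Q1op (prodOp 1 f) + X ^ 2 * Q2op (prodOp 2 f) +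
    X ^ 3 * Q3op (prodOp 3 f) + X ^ 4 * Q4op (prodOp 4 f) + X ^ 5 * Q5op (prodOp 5 f) +
    X ^ 6 * Q6op (prodOp 6 f)

lemma coeff_th (n : ℕ) (f : PowerSeries ℚ) : coeff n (th f) = n * coeff n f := by
  simp [th]

lemma coeff_th_iterate (k n : ℕ) (f : PowerSeries ℚ) :
    coeff n (th^[k] f) = (n : ℚ) ^ k * coeff n f := by
  induction k with
  | zero => simp
  | succ k ih => rw [Function.iterate_succ_apply', coeff_th, ih]; ring

lemma coeff_ofNat_mul (a n : ℕ) [a.AtLeastTwo] (f : PowerSeries ℚ) :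
    coeff n ((ofNat(a) : PowerSeries ℚ) * f) = (ofNat(a) : ℚ) * coeff n f := by
  rw [← map_ofNat (C (R := ℚ)) a, coeff_C_mul]

lemma th_eq_X_mul_derivative (f : PowerSeries ℚ) : th f = X * derivative ℚ f := by
  ext n
  cases n with
  | zero => simp [coeff_th]
  | succ n => rw [coeff_th, coeff_succ_X_mul, coeff_derivative]; push_cast; ring

lemma th_add (f h : PowerSeries ℚ) : th (f + h) = th f + th h := by
  simp only [th_eq_X_mul_derivative, map_add, mul_add]

lemma th_sub (f h : PowerSeries ℚ) : th (f - h) = th f - th h := by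
  simp only [th_eq_X_mul_derivative, map_sub, mul_sub]

lemma th_mul (f h : PowerSeries ℚ) : th (f * h) = th f * h + f * th h := by
  simp only [th_eq_X_mul_derivative, Derivation.leibniz, smul_eq_mul]
  ring

lemma th_X : th (X : PowerSeries ℚ) = X := by
  simp [th_eq_X_mul_derivative]

lemma th_X_pow (n : ℕ) : th ((X : PowerSeries ℚ) ^ n) = n * (X : PowerSeries ℚ) ^ n := by
  induction n with
  | zero => simp [th_eq_X_mul_derivative]
  | succ n ih => rw [pow_succ, th_mul, ih, th_X]; push_cast; ring

lemma th_C_mul (a : ℚ) (f : PowerSeries ℚ) : th (C a * f) = C a * th f := by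
  ext n
  simp only [coeff_th, coeff_C_mul]
  ring

lemma th_ofNat (a : ℕ) [a.AtLeastTwo] : th (ofNat(a) : PowerSeries ℚ) = 0 := by
  rw [← map_ofNat (C (R := ℚ)) a, th_eq_X_mul_derivative, derivative_C, mul_zero]

/-- The hypergeometric modification `Σ c_d q^d ↦ Σ (d!)² c_d q^d`. -/
def factorialSqTwist (f : PowerSeries ℚ) : PowerSeries ℚ :=
  mk fun d => (d.factorial : ℚ) ^ 2 * coeff d f

lemma coeff_prodOp_factorialSqTwist (d n : ℕ) (f : PowerSeries ℚ) :
    coeff n (prodOp d (factorialSqTwist f)) = ((n + d).factorial : ℚ) ^ 2 * coeff n f := by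
  induction d with
  | zero => simp [prodOp, factorialSqTwist]
  | succ d ih =>
    simp only [prodOp, sh, (coeff n).map_add, coeff_th, coeff_C_mul, ih, ← add_assoc,
      Nat.factorial_succ]
    push_cast
    ring

/-- Twisting turns `q^d Q(θ)` into `q^d Q(θ) ∏_{m=1}^{d} (θ+m)²`, for any operator `Q` that acts
diagonally on monomials. -/
lemma X_pow_mul_prodOp_factorialSqTwist {Q : PowerSeries ℚ → PowerSeries ℚ} {p : ℕ → ℚ}
    (hQ : ∀ f n, coeff n (Q f) = p n * coeff n f) (d : ℕ) (f : PowerSeries ℚ) :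
    X ^ d * Q (prodOp d (factorialSqTwist f)) = factorialSqTwist (X ^ d * Q f) := by
  ext n
  simp only [factorialSqTwist, coeff_mk, coeff_X_pow_mul']
  split_ifs with h
  · rw [hQ, hQ, ← factorialSqTwist, coeff_prodOp_factorialSqTwist, Nat.sub_add_cancel h]
    ring
  · simp

lemma factorialSqTwist_add (f h : PowerSeries ℚ) :
    factorialSqTwist (f + h) = factorialSqTwist f + factorialSqTwist h := by
  ext n
  simp [factorialSqTwist, mul_add]

/-- The operator `Σ_d q^d Q_d(θ)`, that is, `P(q,θ)` without its hypergeometric factors. -/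
def untwistedOp (f : PowerSeries ℚ) : PowerSeries ℚ :=
  Q0op f + X * Q1op f + X ^ 2 * Q2op f + X ^ 3 * Q3op f + X ^ 4 * Q4op f + X ^ 5 * Q5op f +
    X ^ 6 * Q6op f

lemma Pop_factorialSqTwist (f : PowerSeries ℚ) :
    Pop (factorialSqTwist f) = factorialSqTwist (untwistedOp f) := by
  have h0 (f : PowerSeries ℚ) (n : ℕ) :
      coeff n (Q0op f) = coeff n (Q0op (mk 1)) * coeff n f := by
    simp only [Q0op, map_sub, coeff_th, coeff_th_iterate,
      coeff_ofNat_mul, coeff_mk, Pi.one_apply]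
    ring
  have h1 (f : PowerSeries ℚ) (n : ℕ) :
      coeff n (Q1op f) = coeff n (Q1op (mk 1)) * coeff n f := by
    simp only [Q1op, neg_mul, map_neg, map_add, map_sub, coeff_th, coeff_th_iterate,
      coeff_ofNat_mul, coeff_mk, Pi.one_apply]
    ring
  have h2 (f : PowerSeries ℚ) (n : ℕ) :
      coeff n (Q2op f) = coeff n (Q2op (mk 1)) * coeff n f := by
    simp only [Q2op, map_add, map_sub, coeff_th, coeff_th_iterate,
      coeff_ofNat_mul, coeff_mk, Pi.one_apply]
    ring
  have h3 (f : PowerSeries ℚ) (n : ℕ) :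
      coeff n (Q3op f) = coeff n (Q3op (mk 1)) * coeff n f := by
    simp only [Q3op, neg_mul, map_neg, map_add, map_sub, coeff_th, coeff_th_iterate,
      coeff_ofNat_mul, coeff_mk, Pi.one_apply]
    ring
  have h4 (f : PowerSeries ℚ) (n : ℕ) :
      coeff n (Q4op f) = coeff n (Q4op (mk 1)) * coeff n f := by
    simp only [Q4op, map_add, coeff_th, coeff_th_iterate,
      coeff_ofNat_mul, coeff_mk, Pi.one_apply]
    ring
  have h5 (f : PowerSeries ℚ) (n : ℕ) :
      coeff n (Q5op f) = coeff n (Q5op (mk 1)) * coeff n f := by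
    simp only [Q5op, neg_mul, map_neg, map_add, map_sub, coeff_th, coeff_th_iterate,
      coeff_ofNat_mul, coeff_mk, Pi.one_apply]
    ring
  have h6 (f : PowerSeries ℚ) (n : ℕ) :
      coeff n (Q6op f) = coeff n (Q6op (mk 1)) * coeff n f := by
    simp only [Q6op, neg_mul, map_neg, coeff_ofNat_mul, coeff_mk, Pi.one_apply]
    ring
  have e0 := X_pow_mul_prodOp_factorialSqTwist h0 0 f
  have e1 := X_pow_mul_prodOp_factorialSqTwist h1 1 f
  simp only [pow_zero, one_mul, pow_one] at e0 e1
  simp only [Pop, untwistedOp, factorialSqTwist_add, e0, e1,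
    X_pow_mul_prodOp_factorialSqTwist h2, X_pow_mul_prodOp_factorialSqTwist h3,
    X_pow_mul_prodOp_factorialSqTwist h4, X_pow_mul_prodOp_factorialSqTwist h5,
    X_pow_mul_prodOp_factorialSqTwist h6]

/-- The connection in the rescaled frame `s = (11 t₀, …, 11 t₄, (11/2) t₅, t₆, t₇)`, in which
the connection matrix is integral. -/
structure IsRescaledFlat (t : Fin 8 → PowerSeries ℚ) : Prop where
  th0 : th (t 0) =
      4 * X * t 1 + 72 * X ^ 2 * t 4 + 20 * X ^ 2 * t 5 + 36 * X ^ 3 * t 7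
  th1 : th (t 1) =
      t 0 + 9 * X * t 2 + 5 * X * t 3 + 12 * X ^ 2 * t 6
  th2 : th (t 2) =
      t 1 + 8 * X * t 4 + 2 * X * t 5
  th3 : th (t 3) =
      6 * X * t 4 + 2 * X * t 5 + 12 * X ^ 2 * t 7
  th4 : th (t 4) =
      t 2
  th5 : th (t 5) =
      2 * t 3 + 3 * X * t 6
  th6 : th (t 6) =
      11 * t 4 + 3 * t 5 + 4 * X * t 7
  th7 : th (t 7) =
      t 6

lemma Q0op_eq (f : PowerSeries ℚ) :
    Q0op f = 242 * (th^[8] f - 2 * th^[7] f + th^[6] f) := by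
  simp only [Q0op, th_sub, Function.iterate_succ_apply', Function.iterate_zero_apply]
  ring

lemma Q1op_eq (f : PowerSeries ℚ) :
    Q1op f = -11 * (1615 * th^[8] f - 4845 * th^[7] f + 4598 * th^[6] f + 1640 * th^[5] f +
      1370 * th^[4] f + 550 * th^[3] f + 88 * th^[2] f) := by
  simp only [Q1op, th_add, th_sub, th_mul, th_ofNat, zero_mul, zero_add,
    Function.iterate_succ_apply', Function.iterate_zero_apply]

lemma untwistedOp_eq_zero {t : Fin 8 → PowerSeries ℚ} (ht : IsRescaledFlat t) :
    untwistedOp (t 7) = 0 := by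
  obtain ⟨th0, th1, th2, th3, th4, th5, th6, th7⟩ := ht
  have i2 : th^[2] (t 7) =
      11 * t 4 + 3 * t 5 + 4 * X * t 7 := by
    rw [Function.iterate_succ_apply', Function.iterate_one, th7, th6]
  have i3 : th^[3] (t 7) =
      11 * t 2 + 6 * t 3 + 13 * X * t 6 + 4 * X * t 7 := by
    rw [Function.iterate_succ_apply', i2]
    simp only [th_add, th_mul, th_ofNat, th_X, th4, th5, th7]
    ring
  have i4 : th^[4] (t 7) =
      11 * t 1 + 267 * X * t 4 + 73 * X * t 5 + 17 * X * t 6 + (4 * X + 124 * X ^ 2) * t 7 := by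
    rw [Function.iterate_succ_apply', i3]
    simp only [th_add, th_mul, th_ofNat, th_X, th2, th3, th6, th7]
    ring
  have i5 : th^[5] (t 7) =
      11 * t 0 + 366 * X * t 2 + 201 * X * t 3 + 454 * X * t 4 + 124 * X * t 5 +
      (21 * X + 475 * X ^ 2) * t 6 + (4 * X + 316 * X ^ 2) * t 7 := by
    rw [Function.iterate_succ_apply', i4]
    simp only [th_add, th_mul, th_ofNat, th_X, th_X_pow, th1, th4, th5, th6, th7]
    push_cast
    ring
  have i6 : th^[6] (t 7) =
      410 * X * t 1 + 820 * X * t 2 + 449 * X * t 3 + (685 * X + 10151 * X ^ 2) * t 4 +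
      (187 * X + 2779 * X ^ 2) * t 5 + (25 * X + 1638 * X ^ 2) * t 6 +
      (4 * X + 716 * X ^ 2 + 4708 * X ^ 3) * t 7 := by
    rw [Function.iterate_succ_apply', i5]
    simp only [th_add, th_mul, th_ofNat, th_X, th_X_pow, th0, th2, th3, th4, th5, th6, th7]
    push_cast
    ring
  have i7 : th^[7] (t 7) =
      410 * X * t 0 + 1230 * X * t 1 + (1505 * X + 13841 * X ^ 2) * t 2 +
      (823 * X + 7608 * X ^ 2) * t 3 + (960 * X + 47574 * X ^ 2) * t 4 +
      (262 * X + 13010 * X ^ 2) * t 5 + (29 * X + 4553 * X ^ 2 + 17965 * X ^ 3) * t 6 +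
      (4 * X + 1532 * X ^ 2 + 26064 * X ^ 3) * t 7 := by
    rw [Function.iterate_succ_apply', i6]
    simp only [th_add, th_mul, th_ofNat, th_X, th_X_pow, th1, th2, th3, th4, th5, th6, th7]
    push_cast
    ring
  have i8 : th^[8] (t 7) =
      1640 * X * t 0 + (2735 * X + 15481 * X ^ 2) * t 1 + (2465 * X + 86326 * X ^ 2) * t 2 +
      (1347 * X + 47386 * X ^ 2) * t 3 + (1279 * X + 162209 * X ^ 2 + 383511 * X ^ 3) * t 4 +
      (349 * X + 44335 * X ^ 2 + 104993 * X ^ 3) * t 5 +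
      (33 * X + 11424 * X ^ 2 + 133749 * X ^ 3) * t 6 +
      (4 * X + 3180 * X ^ 2 + 106280 * X ^ 3 + 177916 * X ^ 4) * t 7 := by
    rw [Function.iterate_succ_apply', i7]
    simp only [th_add, th_mul, th_ofNat, th_X, th_X_pow, th0, th1, th2, th3, th4, th5, th6, th7]
    push_cast
    ring
  simp only [untwistedOp, Q0op_eq, Q1op_eq, Q2op, Q3op, Q4op, Q5op, Q6op, i2, i3, i4, i5, i6, i7,
    i8, th7]
  ring

lemma isRescaledFlat_of_flat {s : Fin 8 → PowerSeries ℚ}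
    (hs : ∀ i : Fin 8, th (s i) = ∑ j : Fin 8, M i j * s j) :
    IsRescaledFlat ![C 11⁻¹ * s 0, C 11⁻¹ * s 1, C 11⁻¹ * s 2, C 11⁻¹ * s 3, C 11⁻¹ * s 4,
      2 * (C 11⁻¹ * s 5), s 6, s 7] := by
  have h1 : 11 * (C (11⁻¹ : ℚ) : PowerSeries ℚ) = 1 := by
    rw [← map_ofNat C, ← map_mul]; norm_num
  have h6 : (C (6 / 11 : ℚ) : PowerSeries ℚ) = 6 * C 11⁻¹ := by
    rw [← map_ofNat C, ← map_mul]; norm_num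
  have h33 : 2 * (C (33 / 2 : ℚ) : PowerSeries ℚ) = 33 := by
    rw [← map_ofNat C, ← map_mul, ← map_ofNat C]; norm_num
  simp only [Fin.forall_fin_succ, Fin.sum_univ_succ] at hs
  simp [M, h6] at hs
  obtain ⟨e0, e1, e2, e3, e4, e5, e6, e7⟩ := hs
  constructor <;> simp only [Matrix.cons_val, th_C_mul]
  · linear_combination C 11⁻¹ * e0 + 36 * X ^ 3 * s 7 * h1
  · linear_combination C 11⁻¹ * e1 + 12 * X ^ 2 * s 6 * h1
  · linear_combination C 11⁻¹ * e2
  · linear_combination C 11⁻¹ * e3 + 12 * X ^ 2 * s 7 * h1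
  · linear_combination C 11⁻¹ * e4
  · rw [th_mul, th_ofNat, th_C_mul]
    linear_combination 2 * C 11⁻¹ * e5 + C 11⁻¹ * X * s 6 * h33 + 3 * X * s 6 * h1
  · linear_combination e6 - s 4 * h1
  · exact e7

/-- quantum Lefschetz for `O(1)^{⊕2}`: if `s₀, …, s₇ ∈ ℚ[[q]]` satisfy
`θ sᵢ = Σ_j M(q)_{ij} s_j` and `s₇ = Σ c_d q^d`, then `g = Σ (d!)² c_d q^d` is annihilated by
`P(q,θ)`. -/
theorem stmt_3 (s : Fin 8 → PowerSeries ℚ)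
    (hs : ∀ i : Fin 8, th (s i) = ∑ j : Fin 8, M i j * s j)
    (g : PowerSeries ℚ)
    (hg : g = PowerSeries.mk fun d => ((d.factorial : ℚ)) ^ 2 * PowerSeries.coeff d (s 7)) :
    Pop g = 0 := by
  have h : untwistedOp (s 7) = 0 := by
    simpa using untwistedOp_eq_zero (isRescaledFlat_of_flat hs)
  rw [hg, ← factorialSqTwist, Pop_factorialSqTwist, h]
  ext n
  simp [factorialSqTwist]

end Stmt3
end
end

section
/- For d ≥ 0 define a_d = (−1)^d Σ_{d₁+d₂=d, d₁,d₂≥0} [(2d₁+d₂)!·(d₁+2d₂)!·(2d₁+2d₂)! / ((d₁!)⁵(d₂!)⁵)] · [1 + (d₁−d₂)·((1/2)(H_{2d₁+d₂} − H_{d₁+2d₂}) − (5/2)(H_{d₁} − H_{d₂}))]. Then the formal power series I₀(q) = Σ_{d≥0} a_d q^d ∈ ℚ[[q]] (with a₀ = 1, a₁ = 10, a₂ = 438) satisfies the fourth-order differential equation {θ⁴ − 2q(2θ+1)²(17θ²+17θ+5) + 4q²(θ+1)²(2θ+1)(2θ+3)} I₀ = 0. -/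
noncomputable section
namespace Stmt4

open PowerSeries

/-- The Euler operator `θ = q·d/dq` on `ℚ[[q]]`. -/
def th (f : PowerSeries ℚ) : PowerSeries ℚ :=
  PowerSeries.mk fun d => (d : ℚ) * PowerSeries.coeff d f

/-- `n`-th harmonic number `H_n = Σ_{m=1}^n 1/m` (with `H_0 = 0`). -/
def H (n : ℕ) : ℚ := ∑ m ∈ Finset.range n, 1 / ((m : ℚ) + 1)

/-- Coefficients of the `I`-function of Calabi–Yau No. 4 (`S*(1) ⊕ O(2)` on `G(2,5)`). -/
def a (d : ℕ) : ℚ :=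
  (-1 : ℚ) ^ d * ∑ d₁ ∈ Finset.range (d + 1),
    (((2 * d₁ + (d - d₁)).factorial : ℚ) * ((d₁ + 2 * (d - d₁)).factorial : ℚ) *
        ((2 * d₁ + 2 * (d - d₁)).factorial : ℚ)) /
      (((d₁.factorial : ℚ)) ^ 5 * (((d - d₁).factorial : ℚ)) ^ 5) *
      (1 + ((d₁ : ℚ) - ((d - d₁ : ℕ) : ℚ)) *
        ((1 / 2) * (H (2 * d₁ + (d - d₁)) - H (d₁ + 2 * (d - d₁))) -
          (5 / 2) * (H d₁ - H (d - d₁))))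

open Finset TrivSqZeroExt

/-- The infinitesimal of `ℚ[ε]`. -/
abbrev ε₀ : DualNumber ℚ := DualNumber.eps

/-- The first-order jet `n! (1 + c H_n ε)` of `∏_{j=1}^n (j + c ε)`. -/
def facJet (c : ℚ) (n : ℕ) : DualNumber ℚ := inl (n.factorial : ℚ) + inr (c * H n * n.factorial)

/-- The inverse of `facJet c n`. -/
def invFacJet (c : ℚ) (n : ℕ) : DualNumber ℚ :=
  inl (1 / (n.factorial : ℚ)) + inr (-(c * H n) / n.factorial)

lemma H_succ (n : ℕ) : H (n + 1) = H n + 1 / ((n : ℚ) + 1) := by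
  simp [H, Finset.sum_range_succ]

lemma facJet_one_succ (n : ℕ) :
    facJet 1 (n + 1) = ((n : DualNumber ℚ) + 1 + ε₀) * facJet 1 n := by
  have h : (n : ℚ) + 1 ≠ 0 := by positivity
  ext
  · simp [facJet, Nat.factorial_succ]
  · simp [facJet, Nat.factorial_succ, H_succ]
    field_simp

lemma facJet_neg_one_succ (n : ℕ) :
    facJet (-1) (n + 1) = ((n : DualNumber ℚ) + 1 - ε₀) * facJet (-1) n := by
  have h : (n : ℚ) + 1 ≠ 0 := by positivity
  ext
  · simp [facJet, Nat.factorial_succ]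
  · simp [facJet, Nat.factorial_succ, H_succ]
    field_simp
    ring

lemma invFacJet_one_eq (n : ℕ) :
    invFacJet 1 n = ((n : DualNumber ℚ) + 1 + ε₀) * invFacJet 1 (n + 1) := by
  have h : (n : ℚ) + 1 ≠ 0 := by positivity
  have h' : (n.factorial : ℚ) ≠ 0 := by positivity
  ext
  · simp [invFacJet, Nat.factorial_succ]
    field_simp
  · simp [invFacJet, Nat.factorial_succ, H_succ]
    field_simp
    ring

lemma invFacJet_neg_one_eq (n : ℕ) :
    invFacJet (-1) n = ((n : DualNumber ℚ) + 1 - ε₀) * invFacJet (-1) (n + 1) := by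
  have h : (n : ℚ) + 1 ≠ 0 := by positivity
  have h' : (n.factorial : ℚ) ≠ 0 := by positivity
  ext
  · simp [invFacJet, Nat.factorial_succ]
    field_simp
  · simp [invFacJet, Nat.factorial_succ, H_succ]
    field_simp
    ring

/-- The jet at `k` of the very-well-poised summand
`(-1)^n (2k - n) C(n,k)^4 C(n+k,n) C(2n-k,n)`, where `n = k + j`. -/
def summand (k j : ℕ) : DualNumber ℚ :=
  (-1) ^ (k + j) * ((k : DualNumber ℚ) - j + 2 * ε₀) *
    ((k + j).factorial : DualNumber ℚ) ^ 2 * facJet 1 (2 * k + j) * facJet (-1) (k + 2 * j) *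
    invFacJet 1 k ^ 5 * invFacJet (-1) j ^ 5

/-- The polynomial factor of the creative-telescoping certificate. -/
def certPoly {R : Type*} [CommRing R] (n x : R) : R :=
  (153 * n ^ 6 + 567 * n ^ 5 + 804 * n ^ 4 + 540 * n ^ 3 + 171 * n ^ 2 + 21 * n) -
    (384 * n ^ 5 + 1112 * n ^ 4 + 1177 * n ^ 3 + 565 * n ^ 2 + 127 * n + 11) * x +
    (358 * n ^ 4 + 741 * n ^ 3 + 526 * n ^ 2 + 165 * n + 22) * x ^ 2 -
    (134 * n ^ 3 + 158 * n ^ 2 + 58 * n + 10) * x ^ 3 +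
    (4 * n ^ 2 - 13 * n - 5) * x ^ 4 + (8 * n + 5) * x ^ 5 - x ^ 6

/-- The jet of the creative-telescoping companion of `summand`. -/
def cert (k j : ℕ) : DualNumber ℚ :=
  (-1) ^ (k + j) * ((k + j).factorial : DualNumber ℚ) ^ 2 * facJet 1 (2 * k + j - 1) *
    facJet (-1) (k + 2 * j - 1) * invFacJet 1 k ^ 5 * ((k : DualNumber ℚ) + ε₀) ^ 5 *
    invFacJet (-1) (j + 1) ^ 5 *
    certPoly ((k : DualNumber ℚ) + j) ((k : DualNumber ℚ) + ε₀)

lemma certPoly_identity {R : Type*} [CommRing R] (n x : R) :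
    -(n + 1) ^ 5 * (2 * x - n - 1) * (n + 1 + x) * (2 * n + 2 - x) * (2 * n + 1 - x) * (n + x) *
        (2 * n - x) * (2 * n - 1 - x) -
      (2 * n + 1) * (17 * n ^ 2 + 17 * n + 5) * (2 * x - n) * (n + x) * (2 * n - x) *
        (2 * n - 1 - x) * (n + 1 - x) ^ 5 -
      n * (2 * x - n + 1) * (n - x) ^ 5 * (n + 1 - x) ^ 5 =
    certPoly n (x + 1) * (n + x) * (n + 1 - x) ^ 5 - certPoly n x * x ^ 5 * (2 * n - 1 - x) := by
  unfold certPoly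
  ring

/-- The middle coefficient of the Apéry recurrence. -/
def aperyCoeff {R : Type*} [CommRing R] (n : R) : R := (2 * n + 1) * (17 * n ^ 2 + 17 * n + 5)

lemma summand_telescope (k j : ℕ) :
    ((k : DualNumber ℚ) + j + 2) ^ 3 * summand k (j + 2) -
        aperyCoeff ((k : DualNumber ℚ) + j + 1) * summand k (j + 1) +
        ((k : DualNumber ℚ) + j + 1) ^ 3 * summand k j = cert (k + 1) j - cert k (j + 1) := by
  have e₁ : 2 * (k + 1) + j - 1 = 2 * k + j + 1 := by omega
  have e₂ : k + 1 + 2 * j - 1 = k + 2 * j := by omega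
  have e₃ : 2 * k + (j + 1) - 1 = 2 * k + j := by omega
  have e₄ : k + 2 * (j + 1) - 1 = k + 2 * j + 1 := by omega
  have e₅ : k + 1 + j = k + j + 1 := by omega
  have e₆ : 2 * k + (j + 2) = 2 * k + j + 1 + 1 := by omega
  have e₇ : k + 2 * (j + 2) = k + 2 * j + 1 + 1 + 1 + 1 := by omega
  have e₈ : k + 2 * (j + 1) = k + 2 * j + 1 + 1 := by omega
  have e₉ : k + (j + 2) = k + j + 1 + 1 := by omega
  have hk : ((k + 1 : ℕ) : DualNumber ℚ) + ε₀ = (k : DualNumber ℚ) + 1 + ε₀ := by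
    push_cast; ring
  have hpow : invFacJet 1 (k + 1) ^ 5 * ((k + 1 : ℕ) + ε₀) ^ 5 = invFacJet 1 k ^ 5 := by
    rw [invFacJet_one_eq k, hk]; ring
  have hc : cert (k + 1) j = (-1) ^ (k + j + 1) * ((k + j + 1).factorial : DualNumber ℚ) ^ 2 *
      facJet 1 (2 * k + j + 1) * facJet (-1) (k + 2 * j) * invFacJet 1 k ^ 5 *
      invFacJet (-1) (j + 1) ^ 5 *
      certPoly ((k : DualNumber ℚ) + j + 1) ((k : DualNumber ℚ) + ε₀ + 1) := by
    rw [cert, e₁, e₂, e₅, ← hpow]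
    have h₁ : ((k + 1 : ℕ) : DualNumber ℚ) + j = k + j + 1 := by push_cast; ring
    have h₂ : ((k + 1 : ℕ) : DualNumber ℚ) + ε₀ = k + ε₀ + 1 := by
      push_cast; ring
    rw [h₁, h₂]
    ring
  obtain ⟨n, hn⟩ : ∃ n : DualNumber ℚ, n = k + j + 1 := ⟨_, rfl⟩
  obtain ⟨x, hx⟩ : ∃ x : DualNumber ℚ, x = k + ε₀ := ⟨_, rfl⟩
  obtain ⟨B, hB⟩ : ∃ B : DualNumber ℚ, B = (-1) ^ (k + j) * ((k + j).factorial : DualNumber ℚ) ^ 2 *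
    facJet 1 (2 * k + j) * facJet (-1) (k + 2 * j) * invFacJet 1 k ^ 5 *
    invFacJet (-1) (j + 1 + 1) ^ 5 := ⟨_, rfl⟩
  have f₁ := facJet_one_succ (2 * k + j)
  have f₂ := facJet_one_succ (2 * k + j + 1)
  have g₁ := facJet_neg_one_succ (k + 2 * j)
  have g₂ := facJet_neg_one_succ (k + 2 * j + 1)
  have g₃ := facJet_neg_one_succ (k + 2 * j + 1 + 1)
  have g₄ := facJet_neg_one_succ (k + 2 * j + 1 + 1 + 1)
  have i₀ := invFacJet_neg_one_eq j
  have i₁ := invFacJet_neg_one_eq (j + 1)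
  have p₁ : ((2 * k + j : ℕ) : DualNumber ℚ) + 1 + ε₀ = n + x := by rw [hn, hx]; push_cast; ring
  have p₂ : ((2 * k + j + 1 : ℕ) : DualNumber ℚ) + 1 + ε₀ = n + 1 + x := by
    rw [hn, hx]; push_cast; ring
  have q₁ : ((k + 2 * j : ℕ) : DualNumber ℚ) + 1 - ε₀ = 2 * n - 1 - x := by
    rw [hn, hx]; push_cast; ring
  have q₂ : ((k + 2 * j + 1 : ℕ) : DualNumber ℚ) + 1 - ε₀ = 2 * n - x := by
    rw [hn, hx]; push_cast; ring
  have q₃ : ((k + 2 * j + 1 + 1 : ℕ) : DualNumber ℚ) + 1 - ε₀ = 2 * n + 1 - x := by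
    rw [hn, hx]; push_cast; ring
  have q₄ : ((k + 2 * j + 1 + 1 + 1 : ℕ) : DualNumber ℚ) + 1 - ε₀ = 2 * n + 2 - x := by
    rw [hn, hx]; push_cast; ring
  have r₀ : (j : DualNumber ℚ) + 1 - ε₀ = n - x := by rw [hn, hx]; ring
  have r₁ : ((j + 1 : ℕ) : DualNumber ℚ) + 1 - ε₀ = n + 1 - x := by rw [hn, hx]; push_cast; ring
  have l₀ : (k : DualNumber ℚ) - j + 2 * ε₀ = 2 * x - n + 1 := by rw [hn, hx]; ring
  have l₁ : (k : DualNumber ℚ) - (j + 1 : ℕ) + 2 * ε₀ = 2 * x - n := by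
    rw [hn, hx]; push_cast; ring
  have l₂ : (k : DualNumber ℚ) - (j + 2 : ℕ) + 2 * ε₀ = 2 * x - n - 1 := by
    rw [hn, hx]; push_cast; ring
  have m₁ : ((k + j + 1).factorial : DualNumber ℚ) = n * (k + j).factorial := by
    rw [hn, Nat.factorial_succ]; push_cast; ring
  have m₂ : ((k + j + 1 + 1).factorial : DualNumber ℚ) = (n + 1) * (n * (k + j).factorial) := by
    rw [← m₁, hn, Nat.factorial_succ (k + j + 1)]; push_cast; ring
  rw [p₁] at f₁
  rw [p₂, f₁] at f₂
  rw [q₁] at g₁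
  rw [q₂, g₁] at g₂
  rw [q₃, g₂] at g₃
  rw [q₄, g₃] at g₄
  rw [r₁] at i₁
  rw [r₀, i₁] at i₀
  have t₀ : summand k j = B * (2 * x - n + 1) * (n - x) ^ 5 * (n + 1 - x) ^ 5 := by
    rw [summand, l₀, i₀, hB]; ring
  have t₁ : summand k (j + 1) = -B * n ^ 2 * (2 * x - n) * (n + x) * (2 * n - x) * (2 * n - 1 - x) *
      (n + 1 - x) ^ 5 := by
    rw [summand, l₁, i₁, e₈, ← add_assoc, ← add_assoc, f₁, g₂, m₁, pow_succ, hB]; ring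
  have t₂ : summand k (j + 2) = B * (n + 1) ^ 2 * n ^ 2 * (2 * x - n - 1) * (n + 1 + x) * (n + x) *
      (2 * n + 2 - x) * (2 * n + 1 - x) * (2 * n - x) * (2 * n - 1 - x) := by
    rw [summand, l₂, e₆, e₇, e₉, f₂, g₄, m₂, pow_succ, pow_succ, hB]; ring
  have c₀ : cert k (j + 1) = -B * n ^ 2 * (2 * n - 1 - x) * x ^ 5 * certPoly n x := by
    have h : (k : DualNumber ℚ) + (j + 1 : ℕ) = n := by rw [hn]; push_cast; ring
    rw [cert, e₃, e₄, h, ← hx, ← add_assoc, g₁, m₁, pow_succ, hB]; ring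
  have c₁ : cert (k + 1) j = -B * n ^ 2 * (n + x) * (n + 1 - x) ^ 5 * certPoly n (x + 1) := by
    rw [hc, ← hn, ← hx, f₁, i₁, m₁, pow_succ, hB]; ring
  have hn' : (k : DualNumber ℚ) + j + 2 = n + 1 := by rw [hn]; ring
  rw [t₀, t₁, t₂, c₀, c₁, hn', ← hn, aperyCoeff]
  linear_combination -B * n ^ 2 * certPoly_identity n x

lemma boundary_identity {R : Type*} [CommRing R] (n e : R) (he : e ^ 2 = 0) :
    -(n + 1) ^ 5 * (n - 1 + 2 * e) * (2 * n + e) * (2 * n + 1 + e) * (n - e) * (n + 1 - e) *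
          (n + 2 - e) * (n + 1 + e) ^ 5 -
        (n + 1) ^ 5 * (n + 1 + 2 * e) * (2 * n + e) * (2 * n + 1 + e) * (2 * n + 2 + e) * (n - e) *
          (n + 1 - e) * (1 - e) ^ 5 -
        aperyCoeff n * (n + 2 * e) * (2 * n + e) * (n - e) * (n + 1 + e) ^ 5 * (1 - e) ^ 5 +
      (n + 1 + e) ^ 5 * (n + e) ^ 5 * certPoly n (n + e) = 0 := by
  unfold aperyCoeff certPoly
  grind

lemma eps_sq : ε₀ ^ 2 = 0 := by
  rw [pow_two, DualNumber.eps_mul_eps]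

lemma summand_boundary (m : ℕ) :
    ((m : DualNumber ℚ) + 2) ^ 3 * (summand (m + 1) 1 + summand (m + 2) 0) -
      aperyCoeff ((m : DualNumber ℚ) + 1) * summand (m + 1) 0 + cert (m + 1) 0 = 0 := by
  have key := boundary_identity ((m : DualNumber ℚ) + 1) ε₀ eps_sq
  have e₁ : 2 * (m + 1) + 1 = 2 * m + 1 + 1 + 1 := by omega
  have e₂ : m + 1 + 2 * 1 = m + 1 + 1 + 1 := by omega
  have e₃ : 2 * (m + 2) + 0 = 2 * m + 1 + 1 + 1 + 1 := by omega
  have e₄ : m + 2 + 2 * 0 = m + 1 + 1 := by omega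
  have e₅ : 2 * (m + 1) + 0 = 2 * m + 1 + 1 := by omega
  have e₆ : 2 * m + 1 + 1 - 1 = 2 * m + 1 := by omega
  have e₇ : m + 1 + 2 * 0 = m + 1 := by omega
  have e₈ : m + 2 + 0 = m + 1 + 1 := by omega
  have e₉ : m + 1 + 0 = m + 1 := by omega
  rw [summand, summand, summand, cert, e₁, e₂, e₃, e₄, e₅, e₆, e₇, e₈, e₉, Nat.add_sub_cancel,
    Nat.factorial_succ (m + 1), facJet_one_succ (2 * m + 1 + 1 + 1),
    facJet_one_succ (2 * m + 1 + 1), facJet_one_succ (2 * m + 1),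
    facJet_neg_one_succ (m + 1 + 1), facJet_neg_one_succ (m + 1), facJet_neg_one_succ m,
    invFacJet_one_eq (m + 1), invFacJet_neg_one_eq 0]
  push_cast
  rw [add_zero ((m : DualNumber ℚ) + 1)]
  generalize certPoly ((m : DualNumber ℚ) + 1) ((m : DualNumber ℚ) + 1 + ε₀) = s at *
  generalize aperyCoeff ((m : DualNumber ℚ) + 1) = q at *
  linear_combination ((-1) ^ (m + 1) * ((m + 1).factorial : DualNumber ℚ) ^ 2 *
    facJet 1 (2 * m + 1) * facJet (-1) m * invFacJet 1 (m + 2) ^ 5 *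
    invFacJet (-1) 1 ^ 5) * key

lemma cert_zero_left (j : ℕ) : cert 0 j = 0 := by
  have h : ((0 : ℕ) + ε₀ : DualNumber ℚ) ^ 5 = 0 := by
    rw [Nat.cast_zero, zero_add]
    linear_combination ε₀ ^ 3 * eps_sq
  rw [cert, h]
  ring

/-- The sum of all `summand k j` with `k + j = n`. -/
def summandSum (n : ℕ) : DualNumber ℚ := ∑ k ∈ range (n + 1), summand k (n - k)

lemma summandSum_recurrence (m : ℕ) :
    ((m : DualNumber ℚ) + 2) ^ 3 * summandSum (m + 2) -
      aperyCoeff ((m : DualNumber ℚ) + 1) * summandSum (m + 1) +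
      ((m : DualNumber ℚ) + 1) ^ 3 * summandSum m = 0 := by
  have tele : ∑ k ∈ range (m + 1), (((m : DualNumber ℚ) + 2) ^ 3 * summand k (m + 2 - k) -
      aperyCoeff ((m : DualNumber ℚ) + 1) * summand k (m + 1 - k) +
      ((m : DualNumber ℚ) + 1) ^ 3 * summand k (m - k)) = cert (m + 1) 0 := by
    have h := Finset.sum_range_sub (fun k => cert k (m + 1 - k)) (m + 1)
    simp only [Nat.sub_self, cert_zero_left, sub_zero] at h
    rw [← h]
    refine Finset.sum_congr rfl fun k hk => ?_
    obtain ⟨j, rfl⟩ := Nat.exists_eq_add_of_le (Nat.lt_succ_iff.mp (mem_range.mp hk))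
    have h₁ : k + j + 2 - k = j + 2 := by omega
    have h₂ : k + j + 1 - k = j + 1 := by omega
    have h₃ : k + j - k = j := by omega
    have h₄ : k + j + 1 - (k + 1) = j := by omega
    rw [h₁, h₂, h₃, h₄, ← summand_telescope]
    push_cast
    rfl
  rw [Finset.sum_add_distrib, Finset.sum_sub_distrib, ← Finset.mul_sum, ← Finset.mul_sum,
    ← Finset.mul_sum] at tele
  have bd := summand_boundary m
  have h₁ : m + 2 - (m + 1) = 1 := by omega
  rw [summandSum, summandSum, summandSum, Finset.sum_range_succ _ (m + 2), Finset.sum_range_succ _ (m + 1),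
    Finset.sum_range_succ _ (m + 1), Nat.sub_self, Nat.sub_self, h₁]
  linear_combination tele + bd

lemma snd_summand (k j : ℕ) :
    (summand k j).snd = 2 * (-1) ^ (k + j) * ((k + j).factorial : ℚ) ^ 2 *
      (((2 * k + j).factorial : ℚ) * ((k + 2 * j).factorial : ℚ) /
        ((k.factorial : ℚ) ^ 5 * (j.factorial : ℚ) ^ 5) *
      (1 + ((k : ℚ) - j) * ((1 / 2) * (H (2 * k + j) - H (k + 2 * j)) -
        (5 / 2) * (H k - H j)))) := by
  have hk : (k.factorial : ℚ) ≠ 0 := by positivity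
  have hj : (j.factorial : ℚ) ≠ 0 := by positivity
  have hs : (-1 : DualNumber ℚ) ^ (k + j) = inlHom ℚ ℚ ((-1) ^ (k + j)) := by
    simp only [map_pow, map_neg, map_one]
  have hf : ((k + j).factorial : DualNumber ℚ) ^ 2 =
      inlHom ℚ ℚ (((k + j).factorial : ℚ) ^ 2) := by
    simp only [map_pow, map_natCast]
  have h2 : (2 : DualNumber ℚ) = inlHom ℚ ℚ 2 := (map_ofNat (inlHom ℚ ℚ) 2).symm
  rw [summand, hs, hf, h2]
  simp [facJet, invFacJet, TrivSqZeroExt.snd_pow]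
  field_simp
  ring

lemma a_eq (d : ℕ) :
    2 * (d.factorial : ℚ) ^ 2 * a d = ((2 * d).factorial : ℚ) * (summandSum d).snd := by
  rw [a, summandSum, TrivSqZeroExt.snd_sum, ← mul_assoc, Finset.mul_sum, Finset.mul_sum]
  refine Finset.sum_congr rfl fun k hk => ?_
  obtain ⟨j, rfl⟩ := Nat.exists_eq_add_of_le (Nat.lt_succ_iff.mp (mem_range.mp hk))
  have h : 2 * k + 2 * j = 2 * (k + j) := by ring
  rw [Nat.add_sub_cancel_left, snd_summand, h]
  ring

lemma a_recurrence (m : ℕ) :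
    ((m : ℚ) + 2) ^ 4 * a (m + 2) -
      2 * (2 * m + 3) ^ 2 * (17 * ((m : ℚ) + 1) ^ 2 + 17 * (m + 1) + 5) * a (m + 1) +
      4 * ((m : ℚ) + 1) ^ 2 * (2 * m + 1) * (2 * m + 3) * a m = 0 := by
  have hrec := congrArg TrivSqZeroExt.snd (summandSum_recurrence m)
  have c₁ : ((m : DualNumber ℚ) + 2) ^ 3 = inlHom ℚ ℚ (((m : ℚ) + 2) ^ 3) := by
    simp only [map_pow, map_add, map_natCast, map_ofNat]
  have c₂ : aperyCoeff ((m : DualNumber ℚ) + 1) = inlHom ℚ ℚ (aperyCoeff ((m : ℚ) + 1)) := by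
    simp only [aperyCoeff, map_mul, map_pow, map_add, map_natCast, map_ofNat, map_one]
  have c₃ : ((m : DualNumber ℚ) + 1) ^ 3 = inlHom ℚ ℚ (((m : ℚ) + 1) ^ 3) := by
    simp only [map_pow, map_add, map_natCast, map_one]
  rw [c₁, c₂, c₃] at hrec
  simp [aperyCoeff] at hrec
  have h₀ := a_eq m
  have h₁ := a_eq (m + 1)
  have h₂ := a_eq (m + 2)
  have e₁ : 2 * (m + 1) = 2 * m + 1 + 1 := by ring
  have e₂ : 2 * (m + 2) = 2 * m + 1 + 1 + 1 + 1 := by ring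
  rw [e₁] at h₁
  rw [e₂] at h₂
  simp only [Nat.factorial_succ] at h₁ h₂
  push_cast at h₁ h₂
  have hm : (m.factorial : ℚ) ≠ 0 := by positivity
  have hp : (m : ℚ) + 1 ≠ 0 := by positivity
  refine mul_left_cancel₀ (mul_ne_zero two_ne_zero
    (mul_ne_zero (pow_ne_zero 2 hp) (pow_ne_zero 2 hm))) ?_
  linear_combination ((m : ℚ) + 2) ^ 2 * h₂ -
    2 * (2 * m + 3) ^ 2 * (17 * ((m : ℚ) + 1) ^ 2 + 17 * (m + 1) + 5) * h₁ +
    4 * ((m : ℚ) + 1) ^ 4 * (2 * m + 1) * (2 * m + 3) * h₀ +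
    4 * ((m : ℚ) + 1) * (2 * m + 1) * (2 * m + 3) * ((2 * m).factorial : ℚ) * hrec

lemma coeff_ofNat_mul_eq (n d : ℕ) [n.AtLeastTwo] (f : PowerSeries ℚ) :
    coeff d ((ofNat(n) : PowerSeries ℚ) * f) = (ofNat(n) : ℚ) * coeff d f := by
  rw [← map_ofNat (PowerSeries.C (R := ℚ)) n, coeff_C_mul]

lemma coeff_th (d : ℕ) (f : PowerSeries ℚ) : coeff d (th f) = d * coeff d f := by
  rw [th, coeff_mk]

/-- `I₀ = Σ a_d q^d` (with `a₀ = 1`, `a₁ = 10`, `a₂ = 438`) is annihilated by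
`θ⁴ − 2q(2θ+1)²(17θ²+17θ+5) + 4q²(θ+1)²(2θ+1)(2θ+3)`. -/
theorem stmt_4 :
    a 0 = 1 ∧ a 1 = 10 ∧ a 2 = 438 ∧
    (∀ I₀ : PowerSeries ℚ, I₀ = PowerSeries.mk a →
      th^[4] I₀ -
        2 * X * ((fun g => 2 * th g + g) ((fun g => 2 * th g + g)
          (17 * th^[2] I₀ + 17 * th I₀ + 5 * I₀))) +
        4 * X ^ 2 * ((fun g => th g + g) ((fun g => th g + g)
          ((fun g => 2 * th g + g) ((fun g => 2 * th g + 3 * g) I₀)))) = 0) := by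
  have h₀ : a 0 = 1 := by simp [a, H]
  have h₁ : a 1 = 10 := by norm_num [a, H, Finset.sum_range_succ, Nat.factorial]
  have h₂ : a 2 = 438 := by norm_num [a, H, Finset.sum_range_succ, Nat.factorial]
  refine ⟨h₀, h₁, h₂, ?_⟩
  rintro _ rfl
  ext d
  rcases d with _ | _ | m
  · simp [th]
  · simp only [Function.iterate_succ, Function.iterate_zero, Function.comp, id, mul_assoc, pow_two,
      map_add, map_sub, map_zero, coeff_ofNat_mul_eq, coeff_succ_X_mul, coeff_zero_X_mul, coeff_th,
      coeff_mk, h₀, h₁]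
    norm_num
  · simp only [Function.iterate_succ, Function.iterate_zero, Function.comp, id, mul_assoc, pow_two,
      map_add, map_sub, map_zero, coeff_ofNat_mul_eq, coeff_succ_X_mul, coeff_th, coeff_mk]
    push_cast
    linear_combination a_recurrence m

end Stmt4
end
end

section
/- For d ≥ 0 define a_d = (−1)^d Σ_{d₁+d₂=d, d₁,d₂≥0} [(2d₁+d₂)!·(d₁+2d₂)!·((d₁+d₂)!)³ / ((d₁!)⁶(d₂!)⁶)] · [1 + (d₁−d₂)·((1/2)(H_{2d₁+d₂} − H_{d₁+2d₂}) − 3(H_{d₁} − H_{d₂}))]. Then the formal power series I₀(q) = Σ_{d≥0} a_d q^d ∈ ℚ[[q]] (with a₀ = 1, a₁ = 7, a₂ = 199, a₃ = 8359) satisfies the fourth-order differential equation {121θ⁴ − 77q(130θ⁴+266θ³+210θ²+77θ+11) − q²(32126θ⁴+89990θ³+103725θ²+55253θ+11198) − q³(28723θ⁴+74184θ³+63474θ²+20625θ+1716) − 7q⁴(1135θ⁴+2336θ³+1881θ²+713θ+110) − 49q⁵(θ+1)⁴} I₀ = 0. -/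
noncomputable section
namespace Stmt5

open PowerSeries

/-- The Euler operator `θ = q·d/dq` on `ℚ[[q]]`. -/
def th (f : PowerSeries ℚ) : PowerSeries ℚ :=
  PowerSeries.mk fun d => (d : ℚ) * PowerSeries.coeff d f

/-- `n`-th harmonic number `H_n = Σ_{m=1}^n 1/m` (with `H_0 = 0`). -/
def H (n : ℕ) : ℚ := ∑ m ∈ Finset.range n, 1 / ((m : ℚ) + 1)

/-- Coefficients of the `I`-function of Calabi–Yau No. 7 (`S*(1) ⊕ O(1)^{⊕3}` on `G(2,6)`). -/
def a (d : ℕ) : ℚ :=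
  (-1 : ℚ) ^ d * ∑ d₁ ∈ Finset.range (d + 1),
    (((2 * d₁ + (d - d₁)).factorial : ℚ) * ((d₁ + 2 * (d - d₁)).factorial : ℚ) *
        (((d₁ + (d - d₁)).factorial : ℚ)) ^ 3) /
      (((d₁.factorial : ℚ)) ^ 6 * (((d - d₁).factorial : ℚ)) ^ 6) *
      (1 + ((d₁ : ℚ) - ((d - d₁ : ℕ) : ℚ)) *
        ((1 / 2) * (H (2 * d₁ + (d - d₁)) - H (d₁ + 2 * (d - d₁))) -
          3 * (H d₁ - H (d - d₁))))

/-- Addition of coefficient lists, given an addition of coefficients. -/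
def listAdd {α : Type*} (f : α → α → α) : List α → List α → List α
  | [], q => q
  | a :: p, [] => a :: p
  | a :: p, b :: q => f a b :: listAdd f p q

/-- Multiplication of coefficient lists, given the operations on coefficients. -/
def listMul {α : Type*} (z : α) (f g : α → α → α) : List α → List α → List α
  | [], _ => []
  | a :: p, q => listAdd f (q.map (g a)) (z :: listMul z f g p q)

/-- Horner evaluation of a coefficient list. -/
def listEval {α R : Type*} [CommRing R] (ev : α → R) (x : R) : List α → R
  | [] => 0
  | a :: p => ev a + x * listEval ev x p

section listEval

variable {α R : Type*} [CommRing R] {ev : α → R} {z : α} {f g : α → α → α}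

theorem listEval_listAdd (hf : ∀ a b, ev (f a b) = ev a + ev b) (x : R) (p q : List α) :
    listEval ev x (listAdd f p q) = listEval ev x p + listEval ev x q := by
  induction p generalizing q with
  | nil => simp [listAdd, listEval]
  | cons a p ih =>
    cases q with
    | nil => simp [listAdd, listEval]
    | cons b q => simp only [listAdd, listEval, ih, hf]; ring

theorem listEval_map (hg : ∀ a b, ev (g a b) = ev a * ev b) (x : R) (a : α) (q : List α) :
    listEval ev x (q.map (g a)) = ev a * listEval ev x q := by
  induction q with
  | nil => simp [listEval]
  | cons b q ih => simp only [List.map_cons, listEval, ih, hg]; ring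

theorem listEval_listMul (hz : ev z = 0) (hf : ∀ a b, ev (f a b) = ev a + ev b)
    (hg : ∀ a b, ev (g a b) = ev a * ev b) (x : R) (p q : List α) :
    listEval ev x (listMul z f g p q) = listEval ev x p * listEval ev x q := by
  induction p with
  | nil => simp [listMul, listEval]
  | cons a p ih =>
    simp only [listMul, listEval, listEval_listAdd hf, listEval_map hg, ih, hz]; ring

end listEval

/-- The ratio of the deformed summand of index `d - j` to the common part of all these summands,
apart from the factors coming from `d!` and from the reciprocal factorials. -/
def weight {R : Type*} [CommRing R] (j : ℕ) (d x : R) : R :=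
  (2 * x - (d - j)) * (∏ i ∈ Finset.range (5 - j), (d + x - 4 + i)) *
    ∏ i ∈ Finset.range (10 - 2 * j), (2 * d - x - 9 + i)

/-- The polynomial `(d - j)! / (d - 4)!`. -/
def factorialRatio {R : Type*} [CommRing R] (j : ℕ) (d : R) : R :=
  ∏ i ∈ Finset.range (4 - j), (d - 3 + i)

/-- Computable integer polynomials in `d` and `x`: the list of the coefficients of the powers
of `x`, each of which is the list of the coefficients of the powers of `d`. -/
structure BiPoly where
  coeffs : List (List ℤ)

namespace BiPoly

instance (n : ℕ) : OfNat BiPoly n := ⟨⟨[[(n : ℤ)]]⟩⟩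

instance : NatCast BiPoly := ⟨fun n => ⟨[[(n : ℤ)]]⟩⟩

instance : Add BiPoly := ⟨fun p q => ⟨listAdd (listAdd Int.add) p.coeffs q.coeffs⟩⟩

instance : Mul BiPoly :=
  ⟨fun p q => ⟨listMul [] (listAdd Int.add) (listMul 0 Int.add Int.mul) p.coeffs q.coeffs⟩⟩

instance : Sub BiPoly := ⟨fun p q => p + ⟨[[-1]]⟩ * q⟩

instance : Pow BiPoly ℕ := ⟨fun p n => n.rec 1 fun _ q => q * p⟩

/-- The product of `f i` over `i < n`. -/
def prodRange (f : ℕ → BiPoly) (n : ℕ) : BiPoly := n.rec 1 fun i q => q * f i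

/-- The value of a polynomial at `(d, x)`. -/
def eval {R : Type*} [CommRing R] (d x : R) (p : BiPoly) : R :=
  listEval (listEval (Int.cast : ℤ → R) d) x p.coeffs

/-- The substitution of `r` for the variable `x`. -/
def subst (r p : BiPoly) : BiPoly :=
  p.coeffs.foldr (fun a q => ⟨[a]⟩ + r * q) 0

section eval

variable {R : Type*} [CommRing R] (d x : R) (p q r : BiPoly)

theorem eval_ofNat (n : ℕ) : eval d x ofNat(n) = (OfNat.ofNat n : ℕ) := by
  change listEval _ _ [[(n : ℤ)]] = _
  simp [listEval]
  rfl

theorem eval_natCast (n : ℕ) : eval d x (n : BiPoly) = n := by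
  change listEval _ _ [[(n : ℤ)]] = _
  simp [listEval]

theorem eval_add : eval d x (p + q) = eval d x p + eval d x q :=
  listEval_listAdd (fun _ _ => listEval_listAdd Int.cast_add _ _ _) _ _ _

theorem eval_mul : eval d x (p * q) = eval d x p * eval d x q :=
  listEval_listMul (ev := listEval (Int.cast : ℤ → R) d) rfl
    (fun _ _ => listEval_listAdd Int.cast_add _ _ _)
    (fun _ _ => listEval_listMul Int.cast_zero Int.cast_add Int.cast_mul _ _ _) _ _ _

theorem eval_sub : eval d x (p - q) = eval d x p - eval d x q := by
  change eval d x (p + ⟨[[-1]]⟩ * q) = _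
  rw [eval_add, eval_mul]
  simp [eval, listEval, sub_eq_add_neg]

theorem eval_pow (n : ℕ) : eval d x (p ^ n) = eval d x p ^ n := by
  induction n with
  | zero => exact (eval_ofNat d x 1).trans (by simp)
  | succ n ih => rw [pow_succ, ← ih, ← eval_mul]; rfl

theorem eval_prodRange (f : ℕ → BiPoly) (n : ℕ) :
    eval d x (prodRange f n) = ∏ i ∈ Finset.range n, eval d x (f i) := by
  induction n with
  | zero => exact (eval_ofNat d x 1).trans (by simp)
  | succ n ih => rw [Finset.prod_range_succ, ← ih, ← eval_mul]; rfl

theorem eval_subst : eval d x (subst r p) = eval d (eval d x r) p := by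
  obtain ⟨l⟩ := p
  induction l with
  | nil => exact (eval_ofNat d x 0).trans Nat.cast_zero
  | cons a l ih =>
    have h : subst r ⟨a :: l⟩ = ⟨[a]⟩ + r * subst r ⟨l⟩ := rfl
    rw [h, eval_add, eval_mul, ih]
    simp [eval, listEval]

theorem eval_eq_zero (h : p.coeffs.all (fun l => l.all (fun n => n == 0)) = true) :
    eval d x p = 0 := by
  obtain ⟨l⟩ := p
  induction l with
  | nil => rfl
  | cons a l ih =>
    simp only [List.all_cons, Bool.and_eq_true] at h
    have ha : listEval (Int.cast : ℤ → R) d a = 0 := by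
      have h := h.1
      clear ih
      induction a with
      | nil => rfl
      | cons b a iha => simp_all [listEval]
    have h2 := ih h.2
    simp only [eval, listEval] at h2 ⊢
    simp [h2, ha]

end eval

/-- The variable `d`. -/
def D : BiPoly := ⟨[[0, 1]]⟩

/-- The variable `x`. -/
def V : BiPoly := ⟨[[], [1]]⟩

theorem eval_D {R : Type*} [CommRing R] (d x : R) : eval d x D = d := by
  simp [eval, D, listEval]

theorem eval_V {R : Type*} [CommRing R] (d x : R) : eval d x V = x := by
  simp [eval, V, listEval]

/-- Computable version of `Stmt5.weight`. -/
def weight (j : ℕ) : BiPoly :=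
  (2 * V - (D - (j : BiPoly))) * prodRange (fun i => D + V - 4 + (i : BiPoly)) (5 - j) *
    prodRange (fun i => 2 * D - V - 9 + (i : BiPoly)) (10 - 2 * j)

/-- Computable version of `Stmt5.factorialRatio`. -/
def factorialRatio (j : ℕ) : BiPoly := prodRange (fun i => D - 3 + (i : BiPoly)) (4 - j)

theorem eval_weight {R : Type*} [CommRing R] (d x : R) (j : ℕ) :
    eval d x (weight j) = Stmt5.weight j d x := by
  simp only [weight, Stmt5.weight, eval_mul, eval_sub, eval_add, eval_natCast, eval_prodRange,
    eval_D, eval_V, eval_ofNat, Nat.cast_ofNat]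

theorem eval_factorialRatio {R : Type*} [CommRing R] (d x : R) (j : ℕ) :
    eval d x (factorialRatio j) = Stmt5.factorialRatio j d := by
  simp only [factorialRatio, Stmt5.factorialRatio, eval_sub, eval_add, eval_natCast,
    eval_prodRange, eval_D, eval_ofNat, Nat.cast_ofNat]

/-- The certificate of the creative telescoping. -/
def certificate : BiPoly := ⟨[
   [0, 0, 0, 0, 2478545879040, -32268306825216, 193422847290624, -712635619636800,
    1815406974507456, -3407394924813360, 4899878574582032, -5539121818645772,
    5009309968318148, -3667106853386249, 2189551507081518, -1070598816765828, 429056003619584,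
    -140610314514347, 37464788503964, -8035028778380, 1365631757556, -179616102351,
    17619496022, -1212732980, 52223576, -1058237],
   [0, 0, 0, -7132142223360, 94426395604992, -566045836277760, 2052438610472640,
    -5062560464301408, 9042140215056336, -12134560743662736, 12510165954189412,
    -10024020702827002, 6254331094116999, -3006350339807157, 1075589025671517,
    -257920501568148, 22905807196549, 11613392676002, -6571864209798, 1859613464682,
    -348964465947, 45161906667, -3911411267, 205359932, -4961145],
   [0, 0, 8042628464640, -109232877017088, 645522173597952, -2199442333510080,
    4762656644982624, -6631548405751392, 5183417010408072, 183806687688000, -6582524935925840,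
    10151671053998565, -9583312342104813, 6550899163755960, -3420887473011546,
    1394561949773388, -447066516233114, 112482926084316, -21984998887332, 3272000412993,
    -358366475673, 27231963876, -1282327802, 28180854],
   [0, -4173061939200, 59432531355648, -329005734018048, 841756000936896, -417950255777184,
    -3996357369413760, 14774186445160160, -29077985756370668, 39047847683356710,
    -38650580837002048, 29218748995556256, -17180538849805386, 7924198847913745,
    -2870656033461742, 812467210557443, -177357923879709, 29178272788431, -3476117313213,
    278737832625, -12794596305, 173588518, 6439183],
   [834612387840, -13513765579776, 49817609376768, 205987896417600, -2401468907602464,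
    9803556401025504, -23977336032176880, 39905755656412324, -47710203518670448,
    41983907182638609, -27284477612064042, 12790576196682741, -3953188001546166,
    493982384836844, 222240941675662, -159921668079177, 53478314042346, -11570406726474,
    1697090838060, -164219208060, 9510981852, -250488135],
   [529581431808, 13177858118400, -269037794642688, 1837754687884320, -6766747018951872,
    15478116508324608, -23158047163945512, 22283804523960892, -11322857252380008,
    -2268329467592685, 9929637661988430, -9921968289795654, 6204102058897476,
    -2761585138119364, 908656458831237, -222617365536909, 40165722198492, -5182737090705,
    451947897651, -23799438231, 569186298],
   [-3295754189568, 75019782612672, -579051214084224, 2183902597140336, -4337237494485848,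
    3283962526427792, 5280659554293696, -19347355128100816, 29922955492217874,
    -30053191619845482, 21605706209767032, -11536581283169973, 4639418853121287,
    -1405668503344688, 317281346375454, -52040386745136, 5927769713643, -431514796164,
    16894335382, -216846757],
   [-6796851626880, 79346028539808, -270544854343920, -155869748299200, 3760938176207072,
    -13025614658852288, 25419264303084021, -33125342130594756, 30712506104259312,
    -20845891032776502, 10458549077199894, -3854494905670818, 1015360919108412,
    -177814167579957, 16143670077663, 578623730730, -357375424554, 40580490003, -1686751992],
   [-3000185707968, -19343532353088, 454889539297968, -2622736323272136, 7974645007967282,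
    -15209950971778698, 19584466086282498, -17572277849660214, 10995150217181832,
    -4583809654852788, 1036952920690587, 65996479594662, -148437099927537, 59040176061564,
    -13272548567562, 1829976475395, -145097198394, 5100016581],
   [6151205431008, -118189342153344, 775240545022680, -2615497177779678, 5263630403467072,
    -6663612838876335, 5153200350697884, -1807187549679608, -800495830313050,
    1505059315163760, -1035023418665202, 442575374139906, -128081745936390, 25254700413176,
    -3266485785983, 250699354430, -8672476562],
   [10287337922832, -112137054909024, 472232075655018, -988529546907930, 942234856626333,
    257891579059107, -1954059328718724, 2797835730593213, -2353538789779562, 1337524871731101,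
    -535076127285429, 151585786252962, -29855896225881, 3895437618592, -303065885566,
    10652054730],
   [6156037792824, -38541169509030, 51151423800810, 202921060764624, -946730673488355,
    1864275982264953, -2249259148833864, 1837101238157939, -1057436575781178, 435048841627263,
    -127435065672657, 25983000847653, -3507032805105, 281813248156, -10210577544],
   [400788926660, 13984770858835, -122409251476752, 430211050982646, -859927905772178,
    1105921530941324, -970999024096914, 599582031730636, -263294106962430, 81849461379432,
    -17612602809225, 2496053675205, -209626885013, 7905180211],
   [-1969875081522, 23033299726545, -102958917574674, 248722298860194, -372768216765883,
    371453593911892, -255179417122386, 122749866853755, -41288315914833, 9517741806504,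
    -1433200430961, 127024905387, -5026451004],
   [-1651258228620, 13521273437682, -45987407246082, 87302863358124, -103999432735531,
    82324271548113, -44480708596878, 16493758714785, -4132293515913, 668826804273,
    -63156609465, 2643755166],
   [-774728376804, 5020764885876, -13695685389300, 20901861175396, -19910626864491,
    12445560821817, -5196981811527, 1438136748480, -253422930783, 25769675131, -1151739076],
   [-247957469760, 1299535884687, -2861124728439, 3497872385145, -2633144725605,
    1272754335981, -396984181836, 77389641612, -8588602938, 414692532],
   [-56394744312, 238416375822, -419993137497, 405398003946, -235994786283, 85331983629,
    -18810971514, 2320949784, -123063759],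
   [-9075429292, 30615521464, -42534577149, 31794755619, -13910187626, 3583080500, -505173986,
    30117782],
   [-1012016628, 2695324926, -2918747223, 1660504188, -526712326, 88474204, -6128430],
   [-77228592, 163423533, -138679653, 59115525, -12566155, 1050777],
   [-4300758, 7538265, -5004657, 1452290, -151270],
   [-215208, 298998, -130095, 17199],
   [-9408, 7644, -1323],
   [-196, 49]]⟩

/-- The difference of the two sides of the telescoping identity. -/
def defect : BiPoly :=
    121 * D ^ 4 * (factorialRatio 0 ^ 3 * weight 0) + (D - V) ^ 6 *
    (77 * (130 * (D - 1) ^ 4 + 266 * (D - 1) ^ 3 + 210 * (D - 1) ^ 2 + 77 * (D - 1) + 11) *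
      (factorialRatio 1 ^ 3 * weight 1) - (D - V - 1) ^ 6 *
    ((32126 * (D - 2) ^ 4 + 89990 * (D - 2) ^ 3 + 103725 * (D - 2) ^ 2 + 55253 * (D - 2) +
      11198) * (factorialRatio 2 ^ 3 * weight 2) - (D - V - 2) ^ 6 *
    ((28723 * (D - 3) ^ 4 + 74184 * (D - 3) ^ 3 + 63474 * (D - 3) ^ 2 + 20625 * (D - 3) +
      1716) * (factorialRatio 3 ^ 3 * weight 3) - (D - V - 3) ^ 6 *
    (7 * (1135 * (D - 4) ^ 4 + 2336 * (D - 4) ^ 3 + 1881 * (D - 4) ^ 2 + 713 * (D - 4) + 110) *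
      (factorialRatio 4 ^ 3 * weight 4) - (D - V - 4) ^ 6 * (49 * (D - 4) * weight 5))))) -
    ((D + V - 4) * (D - V) ^ 6 * subst (V + 1) certificate -
      V ^ 6 * (2 * D - 9 - V) * certificate)

theorem coeffs_defect : defect.coeffs.all (fun l => l.all (fun n => n == 0)) = true := by
  decide +kernel

end BiPoly

theorem telescoping_identity {R : Type*} [CommRing R] (d x : R) :
    121 * d ^ 4 * (factorialRatio 0 d ^ 3 * weight 0 d x) + (d - x) ^ 6 *
    (77 * (130 * (d - 1) ^ 4 + 266 * (d - 1) ^ 3 + 210 * (d - 1) ^ 2 + 77 * (d - 1) + 11) *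
      (factorialRatio 1 d ^ 3 * weight 1 d x) - (d - x - 1) ^ 6 *
    ((32126 * (d - 2) ^ 4 + 89990 * (d - 2) ^ 3 + 103725 * (d - 2) ^ 2 + 55253 * (d - 2) +
      11198) * (factorialRatio 2 d ^ 3 * weight 2 d x) - (d - x - 2) ^ 6 *
    ((28723 * (d - 3) ^ 4 + 74184 * (d - 3) ^ 3 + 63474 * (d - 3) ^ 2 + 20625 * (d - 3) +
      1716) * (factorialRatio 3 d ^ 3 * weight 3 d x) - (d - x - 3) ^ 6 *
    (7 * (1135 * (d - 4) ^ 4 + 2336 * (d - 4) ^ 3 + 1881 * (d - 4) ^ 2 + 713 * (d - 4) + 110) *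
      (factorialRatio 4 d ^ 3 * weight 4 d x) - (d - x - 4) ^ 6 * (49 * (d - 4) * weight 5 d x))))) =
      (d + x - 4) * (d - x) ^ 6 * BiPoly.eval d (x + 1) BiPoly.certificate -
        x ^ 6 * (2 * d - 9 - x) * BiPoly.eval d x BiPoly.certificate := by
  have h := BiPoly.eval_eq_zero d x BiPoly.defect BiPoly.coeffs_defect
  simp only [BiPoly.defect, BiPoly.eval_add, BiPoly.eval_sub, BiPoly.eval_mul, BiPoly.eval_pow,
    BiPoly.eval_subst, BiPoly.eval_ofNat, BiPoly.eval_D, BiPoly.eval_V, BiPoly.eval_weight,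
    BiPoly.eval_factorialRatio, Nat.cast_ofNat, Nat.cast_one] at h
  exact sub_eq_zero.mp h

open DualNumber TrivSqZeroExt

/-- The deformed factorial `∏_{1 ≤ i ≤ n} (i + c)`. -/
def gam (c : ℚ[ε]) (n : ℕ) : ℚ[ε] := ∏ i ∈ Finset.range n, ((i : ℚ[ε]) + 1 + c)

theorem gam_succ (c : ℚ[ε]) (n : ℕ) : gam c (n + 1) = gam c n * ((n : ℚ[ε]) + 1 + c) :=
  Finset.prod_range_succ _ _

theorem fst_gam {c : ℚ[ε]} (hc : c.fst = 0) (n : ℕ) : (gam c n).fst = n.factorial := by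
  induction n with
  | zero => simp [gam]
  | succ n ih =>
    rw [gam_succ, fst_mul, ih, Nat.factorial_succ]
    simp [hc]
    ring

theorem snd_gam {c : ℚ[ε]} (hc : c.fst = 0) (n : ℕ) :
    (gam c n).snd = n.factorial * H n * c.snd := by
  induction n with
  | zero => simp [gam, H]
  | succ n ih =>
    have hH : H (n + 1) = H n + 1 / ((n : ℚ) + 1) := Finset.sum_range_succ _ _
    have hn : (n : ℚ) + 1 ≠ 0 := by positivity
    rw [gam_succ, DualNumber.snd_mul, ih, fst_gam hc, Nat.factorial_succ, hH]
    simp [hc]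
    field_simp
    ring

theorem inv_gam {c : ℚ[ε]} (hc : c.fst = 0) (n : ℕ) :
    (gam c n)⁻¹ = (gam c (n + 1))⁻¹ * ((n : ℚ[ε]) + 1 + c) := by
  have hn : ((n : ℚ[ε]) + 1 + c).fst ≠ 0 := by
    simp only [fst_add, fst_natCast, fst_one, hc]
    positivity
  rw [gam_succ, TrivSqZeroExt.mul_inv_rev, mul_comm _ (gam c n)⁻¹, mul_assoc,
    TrivSqZeroExt.inv_mul_cancel hn, mul_one]

/-- The sixth power of the reciprocal of the deformed factorial of an integer `l`,
which vanishes for negative `l`. -/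
def rgam (l : ℤ) : ℚ[ε] := if 0 ≤ l then (gam (-ε) l.toNat)⁻¹ ^ 6 else 0

theorem eps_pow_six : (ε : ℚ[ε]) ^ 6 = 0 := by
  rw [show (ε : ℚ[ε]) ^ 6 = ε * ε * ε ^ 4 by ring, eps_mul_eps, zero_mul]

theorem rgam_sub_one (l : ℤ) : rgam (l - 1) = rgam l * ((l : ℚ[ε]) - ε) ^ 6 := by
  rcases lt_trichotomy l 0 with h | rfl | h
  · rw [rgam, rgam, if_neg (by omega), if_neg (by omega), zero_mul]
  · rw [rgam, if_neg (by omega)]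
    simp [Even.neg_pow (n := 6) (by decide), eps_pow_six]
  · obtain ⟨m, rfl⟩ : ∃ m : ℕ, l = m + 1 := ⟨(l - 1).toNat, by omega⟩
    rw [rgam, rgam, if_pos (by omega), if_pos (by omega)]
    simp only [add_sub_cancel_right, Int.toNat_natCast, Int.toNat_natCast_add_one]
    rw [inv_gam (by simp), mul_pow]
    push_cast
    ring

/-- The deformed summand of `a m` at `d₁ = k`, up to sign; its `ε`-part is twice the summand. -/
def term (m k : ℕ) : ℚ[ε] :=
  (2 * (k : ℚ[ε]) - (m : ℚ[ε]) + 2 * ε) * gam ε (m + k) * gam (-ε) (2 * m - k) *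
    (m.factorial : ℚ[ε]) ^ 3 * (gam ε k)⁻¹ ^ 6 * rgam (m - k)

theorem snd_term {m k : ℕ} (h : k ≤ m) :
    (term m k).snd = 2 * ((((2 * k + (m - k)).factorial : ℚ) *
      ((k + 2 * (m - k)).factorial : ℚ) * (((k + (m - k)).factorial : ℚ)) ^ 3) /
      (((k.factorial : ℚ)) ^ 6 * (((m - k).factorial : ℚ)) ^ 6) *
      (1 + ((k : ℚ) - ((m - k : ℕ) : ℚ)) *
        ((1 / 2) * (H (2 * k + (m - k)) - H (k + 2 * (m - k))) -
          3 * (H k - H (m - k))))) := by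
  obtain ⟨l, rfl⟩ := Nat.exists_eq_add_of_le h
  have h₁ : 2 * (k + l) - k = k + 2 * l := by omega
  have h₂ : k + l + k = 2 * k + l := by ring
  have h₃ : ((k + l : ℕ) : ℤ) - k = l := by push_cast; ring
  rw [term, h₁, h₂, h₃, rgam, if_pos (by omega), Int.toNat_natCast, Nat.add_sub_cancel_left]
  have e₁ : (ε : ℚ[ε]).fst = 0 := by simp
  have e₂ : (-ε : ℚ[ε]).fst = 0 := by simp
  have h2f : (2 : ℚ[ε]).fst = 2 := fst_natCast 2
  have h2s : (2 : ℚ[ε]).snd = 0 := snd_natCast 2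
  have hk : (k.factorial : ℚ) ≠ 0 := by positivity
  have hl : (l.factorial : ℚ) ≠ 0 := by positivity
  simp only [DualNumber.snd_mul, fst_mul, snd_pow, fst_pow, fst_inv, snd_inv, fst_gam e₁,
    fst_gam e₂, snd_gam e₁, snd_gam e₂, fst_add, snd_add, fst_sub, snd_sub, fst_natCast, snd_natCast,
    fst_eps, snd_eps, snd_neg, smul_eq_mul, op_smul_eq_mul, nsmul_eq_mul,
    Nat.pred_eq_sub_one, Nat.reduceSub, h2f, h2s]
  push_cast
  field_simp
  ring

theorem term_eq_zero {m k : ℕ} (h : m < k) : term m k = 0 := by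
  rw [term, rgam, if_neg (by omega), mul_zero]

theorem a_eq_snd_sum {m N : ℕ} (h : m < N) :
    a m = (-1) ^ m * (1 / 2) * (∑ k ∈ Finset.range N, term m k).snd := by
  have hsub : Finset.range (m + 1) ⊆ Finset.range N := Finset.range_subset_range.mpr h
  rw [← Finset.sum_subset hsub fun k _ hk => term_eq_zero (by simpa using hk), snd_sum,
    Finset.sum_congr rfl fun k hk => snd_term (Finset.mem_range_succ_iff.mp hk),
    ← Finset.mul_sum, a]
  ring

theorem gam_add (c : ℚ[ε]) (m r : ℕ) :
    gam c (m + r) = gam c m * ∏ i ∈ Finset.range r, ((m : ℚ[ε]) + 1 + c + i) := by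
  rw [gam, gam, Finset.prod_range_add]
  congr 1
  refine Finset.prod_congr rfl fun i _ => ?_
  push_cast
  ring

theorem rgam_sub (l : ℤ) (j : ℕ) :
    rgam (l - j) = rgam l * ∏ i ∈ Finset.range j, ((l : ℚ[ε]) - ε - (i : ℚ[ε])) ^ 6 := by
  induction j with
  | zero => simp
  | succ j ih =>
    rw [Finset.prod_range_succ, ← mul_assoc, ← ih, Nat.cast_succ, ← sub_sub, rgam_sub_one]
    push_cast
    ring

/-- The common part of the deformed summands `term (n + 10 - j) k` for `j ≤ 5`. -/
def core (n k : ℕ) : ℚ[ε] :=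
  gam ε (n + 5 + k) * gam (-ε) (2 * n + 10 - k) * (gam ε k)⁻¹ ^ 6 * rgam ((n + 10 : ℕ) - k)

theorem term_eq_core_mul {n k m j : ℕ} (hk : k ≤ n + 10) (hm : m + j = n + 10) (hj : j ≤ 5)
    {d x : ℚ[ε]} (hd : d = n + 10) (hx : x = (k : ℚ[ε]) + ε) :
    term m k = core n k * ((m.factorial : ℚ[ε]) ^ 3 *
      (weight j d x * ∏ i ∈ Finset.range j, (d - x - i) ^ 6)) := by
  have hm' : (m : ℚ[ε]) = d - j := by
    rw [hd, eq_sub_iff_add_eq]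
    simpa using congrArg (Nat.cast : ℕ → ℚ[ε]) hm
  have h₁ : gam ε (m + k) =
      gam ε (n + 5 + k) * ∏ i ∈ Finset.range (5 - j), (d + x - 4 + i) := by
    rw [show m + k = n + 5 + k + (5 - j) by omega, gam_add]
    congr 1
    refine Finset.prod_congr rfl fun i _ => ?_
    rw [hd, hx]
    push_cast
    ring
  have h₂ : gam (-ε) (2 * m - k) = gam (-ε) (2 * n + 10 - k) *
      ∏ i ∈ Finset.range (10 - 2 * j), (2 * d - x - 9 + i) := by
    rw [show 2 * m - k = 2 * n + 10 - k + (10 - 2 * j) by omega, gam_add]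
    congr 1
    refine Finset.prod_congr rfl fun i _ => ?_
    rw [hd, hx, Nat.cast_sub (by omega)]
    push_cast
    ring
  have h₃ : rgam (m - k) = rgam ((n + 10 : ℕ) - k) *
      ∏ i ∈ Finset.range j, (d - x - i) ^ 6 := by
    rw [show (m : ℤ) - k = (n + 10 : ℕ) - k - j by omega, rgam_sub]
    congr 1
    refine Finset.prod_congr rfl fun i _ => ?_
    rw [hd, hx]
    push_cast
    ring
  rw [term, core, weight, h₁, h₂, h₃, hm', hx]
  ring

theorem factorial_eq_mul_factorialRatio {n m j : ℕ} (hm : m + j = n + 10) (hj : j ≤ 4)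
    {d : ℚ[ε]} (hd : d = n + 10) :
    (m.factorial : ℚ[ε]) = (n + 6).factorial * factorialRatio j d := by
  obtain ⟨r, rfl, rfl⟩ : ∃ r, j = 4 - r ∧ m = n + 6 + r := ⟨4 - j, by omega, by omega⟩
  have hr : r ≤ 4 := by omega
  rw [factorialRatio, show 4 - (4 - r) = r by omega]
  clear hm hj hr
  induction r with
  | zero => simp
  | succ r ih =>
    rw [Finset.prod_range_succ, ← mul_assoc, ← ih, ← add_assoc, Nat.factorial_succ, hd]
    push_cast
    ring

theorem sum_weights_eq {R : Type*} [CommRing R] {d x c f : R} (t g : ℕ → R)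
    (ht : ∀ j ≤ 5, t j = c * (g j ^ 3 * (weight j d x * ∏ i ∈ Finset.range j, (d - x - i) ^ 6)))
    (hg : ∀ j ≤ 4, g j = f * factorialRatio j d) (hf : f = (d - 4) * g 5) :
    121 * d ^ 4 * t 0 +
      77 * (130 * (d - 1) ^ 4 + 266 * (d - 1) ^ 3 + 210 * (d - 1) ^ 2 + 77 * (d - 1) + 11) *
        t 1 -
      (32126 * (d - 2) ^ 4 + 89990 * (d - 2) ^ 3 + 103725 * (d - 2) ^ 2 + 55253 * (d - 2) +
        11198) * t 2 +
      (28723 * (d - 3) ^ 4 + 74184 * (d - 3) ^ 3 + 63474 * (d - 3) ^ 2 + 20625 * (d - 3) +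
        1716) * t 3 -
      7 * (1135 * (d - 4) ^ 4 + 2336 * (d - 4) ^ 3 + 1881 * (d - 4) ^ 2 + 713 * (d - 4) + 110) *
        t 4 +
      49 * (d - 4) ^ 4 * t 5 =
    c * ((d + x - 4) * (d - x) ^ 6 * (f ^ 3 * BiPoly.eval d (x + 1) BiPoly.certificate) -
      x ^ 6 * (2 * d - 9 - x) * (f ^ 3 * BiPoly.eval d x BiPoly.certificate)) := by
  have collect : ∀ f e h p₀ p₁ p₂ p₃ p₄ r₀ r₁ r₂ r₃ r₄ w₀ w₁ w₂ w₃ w₄ w₅ y₀ y₁ y₂ y₃ y₄ : R,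
      f = e * h →
      p₀ * (c * ((f * r₀) ^ 3 * (w₀ * 1))) + p₁ * (c * ((f * r₁) ^ 3 * (w₁ * y₀))) -
        p₂ * (c * ((f * r₂) ^ 3 * (w₂ * (y₀ * y₁)))) +
        p₃ * (c * ((f * r₃) ^ 3 * (w₃ * (y₀ * y₁ * y₂)))) -
        p₄ * (c * ((f * r₄) ^ 3 * (w₄ * (y₀ * y₁ * y₂ * y₃)))) +
        49 * e ^ 4 * (c * (h ^ 3 * (w₅ * (y₀ * y₁ * y₂ * y₃ * y₄)))) =
      c * f ^ 3 * (p₀ * (r₀ ^ 3 * w₀) + y₀ * (p₁ * (r₁ ^ 3 * w₁) - y₁ * (p₂ * (r₂ ^ 3 * w₂) -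
        y₂ * (p₃ * (r₃ ^ 3 * w₃) - y₃ * (p₄ * (r₄ ^ 3 * w₄) - y₄ * (49 * e * w₅)))))) := by
    rintro _ e h p₀ p₁ p₂ p₃ p₄ r₀ r₁ r₂ r₃ r₄ w₀ w₁ w₂ w₃ w₄ w₅ y₀ y₁ y₂ y₃ y₄ rfl
    ring
  have regroup : ∀ F u v z w : R, c * F * (u * z - v * w) = c * (u * (F * z) - v * (F * w)) := by
    intros
    ring
  rw [← regroup, ← telescoping_identity, ht 0 (by omega), ht 1 (by omega), ht 2 (by omega),
    ht 3 (by omega), ht 4 (by omega), ht 5 le_rfl, hg 0 (by omega), hg 1 (by omega),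
    hg 2 (by omega), hg 3 (by omega), hg 4 le_rfl]
  simp only [Finset.prod_range_succ, Finset.prod_range_zero, one_mul, Nat.cast_zero, sub_zero,
    Nat.cast_one, Nat.cast_ofNat]
  exact collect _ _ _ _ _ _ _ _ _ _ _ _ _ _ _ _ _ _ _ _ _ _ _ _ hf

theorem sum_terms_eq {n k : ℕ} (hk : k ≤ n + 10) {d x : ℚ[ε]} (hd : d = n + 10)
    (hx : x = (k : ℚ[ε]) + ε) :
    121 * d ^ 4 * term (n + 10) k +
      77 * (130 * (d - 1) ^ 4 + 266 * (d - 1) ^ 3 + 210 * (d - 1) ^ 2 + 77 * (d - 1) + 11) *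
        term (n + 9) k -
      (32126 * (d - 2) ^ 4 + 89990 * (d - 2) ^ 3 + 103725 * (d - 2) ^ 2 + 55253 * (d - 2) +
        11198) * term (n + 8) k +
      (28723 * (d - 3) ^ 4 + 74184 * (d - 3) ^ 3 + 63474 * (d - 3) ^ 2 + 20625 * (d - 3) +
        1716) * term (n + 7) k -
      7 * (1135 * (d - 4) ^ 4 + 2336 * (d - 4) ^ 3 + 1881 * (d - 4) ^ 2 + 713 * (d - 4) + 110) *
        term (n + 6) k +
      49 * (d - 4) ^ 4 * term (n + 5) k =
    core n k * ((d + x - 4) * (d - x) ^ 6 *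
        (((n + 6).factorial : ℚ[ε]) ^ 3 * BiPoly.eval d (x + 1) BiPoly.certificate) -
      x ^ 6 * (2 * d - 9 - x) *
        (((n + 6).factorial : ℚ[ε]) ^ 3 * BiPoly.eval d x BiPoly.certificate)) := by
  refine sum_weights_eq (fun j => term (n + 10 - j) k)
    (fun j => ((n + 10 - j).factorial : ℚ[ε]))
    (fun j hj => term_eq_core_mul hk (by omega) hj hd hx)
    (fun j hj => factorial_eq_mul_factorialRatio (by omega) hj hd) ?_
  rw [Nat.factorial_succ, hd]
  push_cast
  ring

theorem regroup_core {R : Type*} [CommRing R] (g h r s u v w y : R) :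
    g * u * h * s ^ 6 * (r * y ^ 6) * (w ^ 6 * v) =
      g * (h * v) * (s * w) ^ 6 * r * (u * y ^ 6) := by
  ring

theorem core_succ {n k : ℕ} (hk : k < n + 10) {d x : ℚ[ε]} (hd : d = n + 10)
    (hx : x = (k : ℚ[ε]) + ε) :
    core n (k + 1) * ((x + 1) ^ 6 * (2 * d - 9 - (x + 1))) =
      core n k * ((d + x - 4) * (d - x) ^ 6) := by
  obtain ⟨q, hq⟩ : ∃ q, 2 * n + 10 - k = q + 1 := ⟨2 * n + 9 - k, by omega⟩
  have hq' : (q : ℚ[ε]) = 2 * n + 9 - k := by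
    rw [eq_sub_iff_add_eq]
    simpa using congrArg (Nat.cast : ℕ → ℚ[ε]) (by omega : q + k = 2 * n + 9)
  rw [core, core, hq, show 2 * n + 10 - (k + 1) = q by omega, gam_succ (-ε) q, ← add_assoc,
    gam_succ ε (n + 5 + k), inv_gam (c := ε) (by simp) k,
    show ((n + 10 : ℕ) : ℤ) - (k + 1 : ℕ) = (n + 10 : ℕ) - k - 1 by omega, rgam_sub_one]
  have hu : ((n + 5 + k : ℕ) : ℚ[ε]) + 1 + ε = d + x - 4 := by
    rw [hd, hx]
    push_cast
    ring
  have hv : (q : ℚ[ε]) + 1 + -ε = 2 * d - 9 - (x + 1) := by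
    rw [hd, hx, hq']
    ring
  have hw : (k : ℚ[ε]) + 1 + ε = x + 1 := by
    rw [hx]
    ring
  have hy : ((((n + 10 : ℕ) : ℤ) - k : ℤ) : ℚ[ε]) - ε = d - x := by
    rw [hd, hx]
    push_cast
    ring
  rw [hu, hv, hw, hy]
  exact regroup_core _ _ _ _ _ _ _ _

theorem sum_telescope {n : ℕ} {d : ℚ[ε]} (hd : d = n + 10) (g : ℚ[ε] → ℚ[ε]) :
    ∑ k ∈ Finset.range (n + 11), core n k *
      ((d + ((k : ℚ[ε]) + ε) - 4) * (d - ((k : ℚ[ε]) + ε)) ^ 6 * g ((k : ℚ[ε]) + ε + 1) -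
        ((k : ℚ[ε]) + ε) ^ 6 * (2 * d - 9 - ((k : ℚ[ε]) + ε)) * g ((k : ℚ[ε]) + ε)) = 0 := by
  simp only [mul_sub, Finset.sum_sub_distrib]
  rw [Finset.sum_range_succ, Finset.sum_range_succ' _ (n + 10), sub_eq_zero]
  congr 1
  · refine Finset.sum_congr rfl fun k hk => ?_
    have h := core_succ (Finset.mem_range.mp hk) hd rfl
    rw [← mul_assoc, ← h, Nat.cast_succ, add_right_comm (k : ℚ[ε]) 1 ε]
    ring
  · have h : (d - (((n + 10 : ℕ) : ℚ[ε]) + ε)) ^ 6 = 0 := by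
      rw [← eps_pow_six, hd]
      push_cast
      ring
    rw [h, Nat.cast_zero, zero_add, eps_pow_six]
    ring

theorem a_recurrence (n : ℕ) {d : ℚ} (hd : d = n + 10) :
    121 * d ^ 4 * a (n + 10) -
      77 * (130 * (d - 1) ^ 4 + 266 * (d - 1) ^ 3 + 210 * (d - 1) ^ 2 + 77 * (d - 1) + 11) *
        a (n + 9) -
      (32126 * (d - 2) ^ 4 + 89990 * (d - 2) ^ 3 + 103725 * (d - 2) ^ 2 + 55253 * (d - 2) +
        11198) * a (n + 8) -
      (28723 * (d - 3) ^ 4 + 74184 * (d - 3) ^ 3 + 63474 * (d - 3) ^ 2 + 20625 * (d - 3) +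
        1716) * a (n + 7) -
      7 * (1135 * (d - 4) ^ 4 + 2336 * (d - 4) ^ 3 + 1881 * (d - 4) ^ 2 + 713 * (d - 4) + 110) *
        a (n + 6) -
      49 * (d - 4) ^ 4 * a (n + 5) = 0 := by
  have hd' : algebraMap ℚ ℚ[ε] d = n + 10 := by
    rw [hd, map_add, map_natCast, map_ofNat]
  have hsum := (Finset.sum_congr rfl fun k hk => sum_terms_eq
    (Finset.mem_range_succ_iff.mp hk) hd' rfl).trans
    (sum_telescope hd' fun x => ((n + 6).factorial : ℚ[ε]) ^ 3 *
      BiPoly.eval (algebraMap ℚ ℚ[ε] d) x BiPoly.certificate)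
  have hsnd : ∀ (q : ℚ) (z : ℚ[ε]), (algebraMap ℚ ℚ[ε] q * z).snd = q * z.snd := by
    intro q z
    rw [← Algebra.smul_def, snd_smul, smul_eq_mul]
  simp only [Finset.sum_add_distrib, Finset.sum_sub_distrib, ← Finset.mul_sum] at hsum
  have hmap : algebraMap ℚ ℚ[ε] (121 * d ^ 4) * ∑ k ∈ Finset.range (n + 11), term (n + 10) k +
      algebraMap ℚ ℚ[ε] (77 * (130 * (d - 1) ^ 4 + 266 * (d - 1) ^ 3 + 210 * (d - 1) ^ 2 +
        77 * (d - 1) + 11)) * ∑ k ∈ Finset.range (n + 11), term (n + 9) k -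
      algebraMap ℚ ℚ[ε] (32126 * (d - 2) ^ 4 + 89990 * (d - 2) ^ 3 + 103725 * (d - 2) ^ 2 +
        55253 * (d - 2) + 11198) * ∑ k ∈ Finset.range (n + 11), term (n + 8) k +
      algebraMap ℚ ℚ[ε] (28723 * (d - 3) ^ 4 + 74184 * (d - 3) ^ 3 + 63474 * (d - 3) ^ 2 +
        20625 * (d - 3) + 1716) * ∑ k ∈ Finset.range (n + 11), term (n + 7) k -
      algebraMap ℚ ℚ[ε] (7 * (1135 * (d - 4) ^ 4 + 2336 * (d - 4) ^ 3 + 1881 * (d - 4) ^ 2 +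
        713 * (d - 4) + 110)) * ∑ k ∈ Finset.range (n + 11), term (n + 6) k +
      algebraMap ℚ ℚ[ε] (49 * (d - 4) ^ 4) * ∑ k ∈ Finset.range (n + 11), term (n + 5) k = 0 := by
    simpa only [map_mul, map_add, map_sub, map_pow, map_ofNat, map_one] using hsum
  have h := congrArg TrivSqZeroExt.snd hmap
  simp only [snd_add, snd_sub, hsnd, snd_zero] at h
  rw [a_eq_snd_sum (show n + 10 < n + 11 by omega), a_eq_snd_sum (show n + 9 < n + 11 by omega),
    a_eq_snd_sum (show n + 8 < n + 11 by omega), a_eq_snd_sum (show n + 7 < n + 11 by omega),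
    a_eq_snd_sum (show n + 6 < n + 11 by omega), a_eq_snd_sum (show n + 5 < n + 11 by omega)]
  simp only [pow_add]
  linear_combination ((-1) ^ n / 2) * h

theorem coeff_th (f : PowerSeries ℚ) (n : ℕ) : coeff n (th f) = n * coeff n f :=
  coeff_mk _ _

theorem coeff_iterate_th (i : ℕ) (f : PowerSeries ℚ) (n : ℕ) :
    coeff n (th^[i] f) = (n : ℚ) ^ i * coeff n f := by
  induction i with
  | zero => simp
  | succ i ih => rw [Function.iterate_succ_apply', coeff_th, ih, pow_succ', mul_assoc]

theorem coeff_ofNat_mul (k : ℕ) [k.AtLeastTwo] (f : PowerSeries ℚ) (n : ℕ) :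
    coeff n ((ofNat(k) : PowerSeries ℚ) * f) = ofNat(k) * coeff n f := by
  rw [← map_ofNat (C (R := ℚ)) k, coeff_C_mul]

theorem coeff_X_mul_eq_ite (f : PowerSeries ℚ) (n : ℕ) :
    coeff n (X * f) = if 1 ≤ n then coeff (n - 1) f else 0 := by
  rw [← coeff_X_pow_mul', pow_one]

theorem a_initial :
    a 0 = 1 ∧ a 1 = 7 ∧ a 2 = 199 ∧ a 3 = 8359 ∧
    a 4 = 423751 ∧ a 5 = 23973757 ∧ a 6 = 1457477659 ∧
    a 7 = 93222362023 ∧ a 8 = 6192061490503 ∧ a 9 = 423467225669257 := by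
  refine ⟨?_, ?_, ?_, ?_, ?_, ?_, ?_, ?_, ?_, ?_⟩ <;>
    norm_num [a, H, Finset.sum_range_succ, Nat.factorial]


/-- `I₀ = Σ a_d q^d` (with `a₀ = 1`, `a₁ = 7`, `a₂ = 199`, `a₃ = 8359`)
is annihilated by `121θ⁴ − 77q(130θ⁴+266θ³+210θ²+77θ+11)
− q²(32126θ⁴+89990θ³+103725θ²+55253θ+11198) − q³(28723θ⁴+74184θ³+63474θ²+20625θ+1716)
− 7q⁴(1135θ⁴+2336θ³+1881θ²+713θ+110) − 49q⁵(θ+1)⁴`. -/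
theorem stmt_5 :
    a 0 = 1 ∧ a 1 = 7 ∧ a 2 = 199 ∧ a 3 = 8359 ∧
    (∀ I₀ : PowerSeries ℚ, I₀ = PowerSeries.mk a →
      121 * th^[4] I₀ -
        77 * X * (130 * th^[4] I₀ + 266 * th^[3] I₀ + 210 * th^[2] I₀ + 77 * th I₀ + 11 * I₀) -
        X ^ 2 * (32126 * th^[4] I₀ + 89990 * th^[3] I₀ + 103725 * th^[2] I₀ +
          55253 * th I₀ + 11198 * I₀) -
        X ^ 3 * (28723 * th^[4] I₀ + 74184 * th^[3] I₀ + 63474 * th^[2] I₀ +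
          20625 * th I₀ + 1716 * I₀) -
        7 * X ^ 4 * (1135 * th^[4] I₀ + 2336 * th^[3] I₀ + 1881 * th^[2] I₀ +
          713 * th I₀ + 110 * I₀) -
        49 * X ^ 5 * ((fun g => th g + g) ((fun g => th g + g) ((fun g => th g + g)
          ((fun g => th g + g) I₀)))) = 0) := by
  obtain ⟨h₀, h₁, h₂, h₃, h₄, h₅, h₆, h₇, h₈, h₉⟩ := a_initial
  refine ⟨h₀, h₁, h₂, h₃, ?_⟩
  rintro _ rfl
  ext d
  simp only [mul_assoc, map_sub, map_add, map_zero, coeff_ofNat_mul, coeff_X_mul_eq_ite,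
    coeff_X_pow_mul', coeff_iterate_th, coeff_th, coeff_mk]
  by_cases h : d < 10
  · interval_cases d <;> norm_num [h₀, h₁, h₂, h₃, h₄, h₅, h₆, h₇, h₈, h₉]
  · obtain ⟨n, rfl⟩ := Nat.exists_eq_add_of_le' (not_lt.mp h)
    rw [if_pos (by omega), if_pos (by omega), if_pos (by omega), if_pos (by omega),
      if_pos (by omega)]
    simp only [Nat.reduceSubDiff]
    have hrec := a_recurrence n rfl
    push_cast
    linear_combination hrec

end Stmt5
end
end

section
/- For d ≥ 0 define a_d = (−1)^d Σ_{d₁+d₂=d, d₁,d₂≥0} [(2d₁)!·(2d₂)!·((d₁+d₂)!)⁵ / ((d₁!)⁷(d₂!)⁷)] · [1 + (d₁−d₂)·(H_{2d₁} − H_{2d₂} − (7/2)(H_{d₁} − H_{d₂}))]. Then the formal power series I₀(q) = Σ_{d≥0} a_d q^d ∈ ℚ[[q]] (with a₀ = 1, a₁ = 4, a₂ = 64) satisfies the fourth-order differential equation {49θ⁴ − 14q(134θ⁴+286θ³+234θ²+91θ+14) − 4q²(3183θ⁴+10266θ³+13501θ²+8225θ+1918) − 8q³(2588θ⁴+8400θ³+10256θ²+5649θ+1190)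 − 48q⁴(256θ⁴+848θ³+1141θ²+717θ+174) − 2304q⁵(θ+1)⁴} I₀ = 0. -/
noncomputable section
namespace Stmt6

open PowerSeries

/-- The Euler operator `θ = q·d/dq` on `ℚ[[q]]`. -/
def th (f : PowerSeries ℚ) : PowerSeries ℚ :=
  PowerSeries.mk fun d => (d : ℚ) * PowerSeries.coeff d f

/-- `n`-th harmonic number `H_n = Σ_{m=1}^n 1/m` (with `H_0 = 0`). -/
def H (n : ℕ) : ℚ := ∑ m ∈ Finset.range n, 1 / ((m : ℚ) + 1)

/-- Coefficients of the `I`-function of Calabi–Yau No. 13 (`Sym²S* ⊕ O(1)^{⊕4}` on `G(2,7)`). -/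
def a (d : ℕ) : ℚ :=
  (-1 : ℚ) ^ d * ∑ d₁ ∈ Finset.range (d + 1),
    (((2 * d₁).factorial : ℚ) * ((2 * (d - d₁)).factorial : ℚ) *
        (((d₁ + (d - d₁)).factorial : ℚ)) ^ 5) /
      (((d₁.factorial : ℚ)) ^ 7 * (((d - d₁).factorial : ℚ)) ^ 7) *
      (1 + ((d₁ : ℚ) - ((d - d₁ : ℕ) : ℚ)) *
        (H (2 * d₁) - H (2 * (d - d₁)) - (7 / 2) * (H d₁ - H (d - d₁))))

/-! ### Computable bivariate integer polynomials -/

/-- Value at `x` of the polynomial with coefficient list `l` (constant term first), where `ev`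
interprets the coefficients. -/
def evalList {A R : Type*} [CommRing R] (ev : A → R) (x : R) : List A → R
  | [] => 0
  | c :: l => ev c + x * evalList ev x l

/-- Sum of coefficient lists. -/
def addList {A : Type*} (add : A → A → A) : List A → List A → List A
  | [], q => q
  | p, [] => p
  | c :: p, d :: q => add c d :: addList add p q

/-- Product of coefficient lists. -/
def mulList {A : Type*} (zero : A) (add mul : A → A → A) : List A → List A → List A
  | [], _ => []
  | c :: p, q => addList add (q.map (mul c)) (zero :: mulList zero add mul p q)

section evalList

variable {A R : Type*} [CommRing R] {ev : A → R} (x : R)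

theorem evalList_addList {add : A → A → A} (hadd : ∀ c d, ev (add c d) = ev c + ev d)
    (p q : List A) :
    evalList ev x (addList add p q) = evalList ev x p + evalList ev x q := by
  induction p generalizing q with
  | nil => simp [addList, evalList]
  | cons c p ih =>
    cases q with
    | nil => simp [addList, evalList]
    | cons d q => simp only [addList, evalList, hadd, ih]; ring

theorem evalList_map_mul {mul : A → A → A} (hmul : ∀ c d, ev (mul c d) = ev c * ev d)
    (c : A) (q : List A) :
    evalList ev x (q.map (mul c)) = ev c * evalList ev x q := by
  induction q with
  | nil => simp [evalList]
  | cons d q ih => simp only [List.map_cons, evalList, hmul, ih]; ring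

theorem evalList_mulList {zero : A} {add mul : A → A → A} (hzero : ev zero = 0)
    (hadd : ∀ c d, ev (add c d) = ev c + ev d) (hmul : ∀ c d, ev (mul c d) = ev c * ev d)
    (p q : List A) :
    evalList ev x (mulList zero add mul p q) = evalList ev x p * evalList ev x q := by
  induction p with
  | nil => simp [mulList, evalList]
  | cons c p ih =>
    simp only [mulList, evalList, evalList_addList x hadd, evalList_map_mul x hmul, hzero, ih]
    ring

end evalList

/-- A polynomial in `n` and `k` over `ℤ`: entry `j` is the coefficient list, in powers of `n`, of
`k ^ j`. -/
structure BiPoly where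
  /-- The coefficients. -/
  coeffs : List (List ℤ)

namespace BiPoly

instance : Add BiPoly := ⟨fun p q => ⟨addList (addList (· + ·)) p.coeffs q.coeffs⟩⟩

instance : Mul BiPoly :=
  ⟨fun p q => ⟨mulList [] (addList (· + ·)) (mulList 0 (· + ·) (· * ·)) p.coeffs q.coeffs⟩⟩

instance (m : ℕ) : OfNat BiPoly m := ⟨⟨[[(m : ℤ)]]⟩⟩

instance : Neg BiPoly := ⟨fun p => ⟨[[-1]]⟩ * p⟩

instance : Sub BiPoly := ⟨fun p q => p + -q⟩

/-- Powers by repeated multiplication. -/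
def pow (p : BiPoly) : ℕ → BiPoly
  | 0 => 1
  | m + 1 => p * pow p m

instance : Pow BiPoly ℕ := ⟨pow⟩

/-- Substitution of `k + 1` for `k` in a coefficient list. -/
def shiftList : List (List ℤ) → BiPoly
  | [] => ⟨[]⟩
  | c :: l => ⟨[c]⟩ + ⟨[[1], [1]]⟩ * shiftList l

/-- Substitution of `k + 1` for `k`. -/
def shift (p : BiPoly) : BiPoly := shiftList p.coeffs

/-- Whether all coefficients vanish. -/
def isZero (p : BiPoly) : Bool := p.coeffs.all fun l => l.all fun c => c == 0

section eval

variable {R : Type*} [CommRing R] (n k : R)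

/-- The value of a polynomial at a point. -/
def eval (p : BiPoly) : R := evalList (evalList (fun c : ℤ => (c : R)) n) k p.coeffs

theorem eval_add (p q : BiPoly) : (p + q).eval n k = p.eval n k + q.eval n k :=
  evalList_addList k (evalList_addList n Int.cast_add) _ _

theorem eval_mul (p q : BiPoly) : (p * q).eval n k = p.eval n k * q.eval n k :=
  evalList_mulList (ev := evalList (fun c : ℤ => (c : R)) n) k rfl (evalList_addList n Int.cast_add)
    (evalList_mulList n Int.cast_zero Int.cast_add Int.cast_mul) _ _

theorem eval_neg (p : BiPoly) : (-p).eval n k = -p.eval n k := by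
  change (⟨[[-1]]⟩ * p : BiPoly).eval n k = _
  rw [eval_mul]
  simp [eval, evalList]

theorem eval_sub (p q : BiPoly) : (p - q).eval n k = p.eval n k - q.eval n k := by
  change (p + -q).eval n k = _
  rw [eval_add, eval_neg, sub_eq_add_neg]

theorem eval_ofNat (m : ℕ) [m.AtLeastTwo] :
    (ofNat(m) : BiPoly).eval n k = (ofNat(m) : R) := by
  change evalList (evalList (fun c : ℤ => (c : R)) n) k [[(m : ℤ)]] = _
  simp only [evalList, mul_zero, add_zero, Int.cast_natCast]
  rfl

theorem eval_one : (1 : BiPoly).eval n k = 1 := by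
  change evalList (evalList (fun c : ℤ => (c : R)) n) k [[((1 : ℕ) : ℤ)]] = _
  simp [evalList]

theorem eval_pow (p : BiPoly) (m : ℕ) : (p ^ m).eval n k = p.eval n k ^ m := by
  change (pow p m).eval n k = _
  induction m with
  | zero => simp [pow, eval_one]
  | succ m ih => rw [pow, eval_mul, ih, pow_succ']

theorem eval_shift (p : BiPoly) : p.shift.eval n k = p.eval n (k + 1) := by
  obtain ⟨l⟩ := p
  change (shiftList l).eval n k = _
  induction l with
  | nil => rfl
  | cons c l ih =>
    rw [shiftList, eval_add, eval_mul, ih]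
    simp [eval, evalList, add_comm]

theorem eval_eq_zero {p : BiPoly} (hp : p.isZero = true) : p.eval n k = 0 := by
  have key : ∀ {A : Type} (ev : A → R) (x : R) (l : List A), (∀ c ∈ l, ev c = 0) →
      evalList ev x l = 0 := by
    intro A ev x l hl
    induction l with
    | nil => rfl
    | cons c l ih => simp_all [evalList]
  simp only [isZero, List.all_eq_true, beq_iff_eq] at hp
  exact key _ _ _ fun l hl => key _ _ _ fun c hc => by simp [hp l hl c hc]

end eval

end BiPoly

/-! ### The Wilf–Zeilberger certificate -/

/-- The polynomial part of the certificate. -/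
def certPoly : BiPoly := ⟨
  [[8060097542400000, 70659368196480000, 293589392969424000, 769925052008291200,
    1431483154677265760, 2009101114093080896, 2212665599223355240, 1962074729318252976,
    1426110793609042934, 860375380935283262, 434637556673919984, 184928115180778914,
    66495149663658834, 20231196356775180, 5203863895673632, 1128214150433188, 205047248530566,
    30979835972470, 3844059995488, 384971312250, 30339927702, 1811151776, 76957672, 2073456,
    26620],
   [-12237890924160000, -101851941857568000, -400541213392998400, -991361091988787520,
    -1734876078886970496, -2285723792124743888, -2356710611477273216, -1951013006193746676,
    -1319959269018699556, -738838650185744996, -345040432871887856, -135153762451273976,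
    -44524190060882916, -12339624090931376, -2870986718788288, -558132117914884, -89958217823436,
    -11881501248068, -1264254931888, -105701995984, -6685393836, -300642072, -8564512, -116160],
   [2318339387880000, 18968456660040000, 70585166776711600, 159889199312221600,
    247981488514358188, 279951284280876764, 238021047447510003, 154984501194350511,
    77354122391325835, 28935634506651100, 7472929818869476, 877898901701612, -269161762738010,
    -195128901637622, -65398778745947, -15085318712631, -2586082199007, -335211621070,
    -32582167204, -2307136564, -112429974, -3367940, -46640],
   [7901633093376000, 54381143993880000, 180423517495520160, 384892157886107520,
    592984572039565296, 701061246876084472, 658577196776812376, 501802320449902680,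
    313878035932323066, 162248794154196202, 69520489919642994, 24699648126117798,
    7261217320750954, 1758268317008226, 348069787451434, 55701078722402, 7087704194988,
    699830587244, 51653272164, 2680220952, 87161864, 1335960],
   [-11769386308446720, -70424575063732128, -198214716140584992, -350743801453253736,
    -440925084126483486, -422706369462060729, -324206048442909052, -205709339975157422,
    -110253916306129679, -50350665201130824, -19560871228526624, -6410196022246485,
    -1750730250964219, -392973143250840, -71344226583383, -10273376602035, -1143058799812,
    -94586000211, -5472870169, -197412118, -3339176],
   [14707868889650688, 79185961586063520, 193868000036077440, 283573811309120112,
    272021988199925004, 173810910235615604, 67367420223397748, 6171556605473000,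
    -11083472944507224, -8755020689763448, -3824235296179570, -1159081891383032, -257086053547462,
    -41999785154680, -4937866556562, -391346468036, -17308960646, -49279620, 34579880, 1223876],
   [-17385410948511888, -90900675623629032, -216208008394372086, -307663351695146483,
    -288120133207301563, -181377417657198330, -71531182630457781, -9976326169951675,
    7847810006199237, 6778766303654123, 2963783462606763, 887366292697689, 194736571008599,
    31851889923259, 3855190643202, 335950772295, 19942913761, 721507674, 11984476],
   [16522202330740608, 84647057992131852, 198611474314281830, 282213392733301890,
    270105424984369092, 182632084171330676, 88370678387574856, 29771708311078296,
    6093563047620854, 160263238532584, -386426588360926, -157346235429608, -36151284477910,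
    -5579332942764, -592042123744, -41746905034, -1769901092, -34235124],
   [-12118801978165950, -59991615968196915, -136312540838007815, -188372689051594706,
    -176731938492896318, -118888320822929441, -58947491621726842, -21746112228985639,
    -5918092989785978, -1144778653373235, -140107324833276, -5401980204436, 1598445828487,
    359679744100, 36553392304, 1977587900, 46099976],
   [6989709125597880, 32980934866411020, 71354614649819424, 93828740031202020, 83773693542081120,
    53709439827462688, 25484815533063630, 9081761253608704, 2437639628027610, 488587495946224,
    71445315294420, 7264036193312, 461753346900, 12934126304, -271895664, -21774952],
   [-3251161465440582, -14461524981353712, -29403700736134200, -36212366634183147,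
    -30166181714460195, -17969297921011309, -7885552421596093, -2586155608777003,
    -635676928093467, -116192343775200, -15477609016806, -1446783103667, -88656770087,
    -3118140308, -45221316],
   [1243765645271532, 5166081762756840, 9763211628454398, 11115903241381218, 8505879653301924,
    4618244252204362, 1829691761869228, 535246530317950, 115510812173880, 18140341584144,
    2011478750922, 148749512522, 6550486016, 128982464],
   [-396520249959594, -1524296895973953, -2650098927863997, -2755720368476342, -1908987573994924,
    -928089671777290, -324662701224782, -82320112844673, -15009404967063, -1918084995238,
    -162941936000, -8252335640, -188136556],
   [106159920594720, 374308049233908, 592362480877160, 555521399489172, 343079707347132,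
    146521807336264, 44158024848378, 9390669662268, 1380794852926, 133663019760, 7663394400,
    197037344],
   [-23947515243990, -76694596156098, -109203000653582, -91059413167841, -49254143589467,
    -18060779557653, -4547287671885, -776289666063, -85995712615, -5581709248, -161169964],
   [4549777437540, 13089527700024, 16543374775266, 12059050944150, 5588544636648, 1707927366726,
    344272044120, 44142700002, 3267228840, 106359912],
   [-725240280342, -1849851391269, -2041187457873, -1273015722510, -490938820236, -119914264548,
    -18119947596, -1548975228, -57360048],
   [96275412504, 214204407732, 202031737344, 104743107036, 32247426528, 5897172240, 593268624,
    25333992],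
   [-10520797698, -19994197884, -15664970724, -6478382625, -1491991107, -181478328, -9110508],
   [930352884, 1467888648, 916846746, 283462566, 43392696, 2631912],
   [-64921950, -81622503, -38095083, -7824834, -596988],
   [3441168, 3231468, 1001592, 102492],
   [-130194, -81162, -12528],
   [3132, 972],
   [-36]]⟩

/-- The defect of the telescoping identity; `x` stands for `n + 5 - k`. -/
def telescopingDefect : BiPoly :=
  let n : BiPoly := ⟨[[0, 1]]⟩
  let k : BiPoly := ⟨[[], [1]]⟩
  let x : BiPoly := n + 5 - k
  2304 * (n + 1) ^ 4 *
      1 * (2 * k - n) *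
      ((x - 4) ^ 6 * (x - 3) ^ 6 * (x - 2) ^ 6 * (x - 1) ^ 6 * x ^ 6) +
    -(48 * (256 * (n + 1) ^ 4 + 848 * (n + 1) ^ 3 + 1141 * (n + 1) ^ 2 + 717 * (n + 1) + 174)) *
      (n + 1) ^ 5 * (2 * k - (n + 1)) *
      (2 * (2 * x - 9) * (x - 3) ^ 6 * (x - 2) ^ 6 * (x - 1) ^ 6 * x ^ 6) +
    8 * (2588 * (n + 2) ^ 4 + 8400 * (n + 2) ^ 3 + 10256 * (n + 2) ^ 2 + 5649 * (n + 2) + 1190) *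
      ((n + 1) * (n + 2)) ^ 5 * (2 * k - (n + 2)) *
      (4 * (2 * x - 9) * (2 * x - 7) * (x - 2) ^ 6 * (x - 1) ^ 6 * x ^ 6) +
    -(4 * (3183 * (n + 3) ^ 4 + 10266 * (n + 3) ^ 3 + 13501 * (n + 3) ^ 2 + 8225 * (n + 3) +
      1918)) * ((n + 1) * (n + 2) * (n + 3)) ^ 5 * (2 * k - (n + 3)) *
      (8 * (2 * x - 9) * (2 * x - 7) * (2 * x - 5) * (x - 1) ^ 6 * x ^ 6) +
    14 * (134 * (n + 4) ^ 4 + 286 * (n + 4) ^ 3 + 234 * (n + 4) ^ 2 + 91 * (n + 4) + 14) *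
      ((n + 1) * (n + 2) * (n + 3) * (n + 4)) ^ 5 * (2 * k - (n + 4)) *
      (16 * (2 * x - 9) * (2 * x - 7) * (2 * x - 5) * (2 * x - 3) * x ^ 6) +
    49 * (n + 5) ^ 4 *
      ((n + 1) * (n + 2) * (n + 3) * (n + 4) * (n + 5)) ^ 5 * (2 * k - (n + 5)) *
      (32 * (2 * x - 9) * (2 * x - 7) * (2 * x - 5) * (2 * x - 3) * (2 * x - 1)) +
    32 * (n + 1) ^ 4 * ((2 * k + 1) * x ^ 6 * certPoly.shift - k ^ 6 * (2 * x - 9) * certPoly)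

theorem telescopingDefect_isZero : telescopingDefect.isZero = true := by
  decide +kernel

section identity

variable {R : Type*} [CommRing R]

/-- The coefficient polynomials, up to sign, of the recurrence for `a`: the coefficient of
`(-1) ^ (n + r) * a (n + r)` is `opCoeff r (n + r)`. -/
def opCoeff (r : Fin 6) (t : R) : R :=
  match r with
  | 0 => 2304 * (t + 1) ^ 4
  | 1 => -(48 * (256 * t ^ 4 + 848 * t ^ 3 + 1141 * t ^ 2 + 717 * t + 174))
  | 2 => 8 * (2588 * t ^ 4 + 8400 * t ^ 3 + 10256 * t ^ 2 + 5649 * t + 1190)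
  | 3 => -(4 * (3183 * t ^ 4 + 10266 * t ^ 3 + 13501 * t ^ 2 + 8225 * t + 1918))
  | 4 => 14 * (134 * t ^ 4 + 286 * t ^ 3 + 234 * t ^ 2 + 91 * t + 14)
  | 5 => 49 * t ^ 4

/-- The quotient `(n + r)! ^ 5 / n ! ^ 5`. -/
def rise (r : Fin 6) (n : R) : R :=
  match r with
  | 0 => 1
  | 1 => (n + 1) ^ 5
  | 2 => ((n + 1) * (n + 2)) ^ 5
  | 3 => ((n + 1) * (n + 2) * (n + 3)) ^ 5
  | 4 => ((n + 1) * (n + 2) * (n + 3) * (n + 4)) ^ 5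
  | 5 => ((n + 1) * (n + 2) * (n + 3) * (n + 4) * (n + 5)) ^ 5

/-- For a solution of `y ^ 6 * w y = 2 * (2 * y - 1) * w (y - 1)`, the value `w (x - 5 + r)` up to
a factor independent of `r`. -/
def shiftFactor (r : Fin 6) (x : R) : R :=
  match r with
  | 0 => (x - 4) ^ 6 * (x - 3) ^ 6 * (x - 2) ^ 6 * (x - 1) ^ 6 * x ^ 6
  | 1 => 2 * (2 * x - 9) * (x - 3) ^ 6 * (x - 2) ^ 6 * (x - 1) ^ 6 * x ^ 6
  | 2 => 4 * (2 * x - 9) * (2 * x - 7) * (x - 2) ^ 6 * (x - 1) ^ 6 * x ^ 6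
  | 3 => 8 * (2 * x - 9) * (2 * x - 7) * (2 * x - 5) * (x - 1) ^ 6 * x ^ 6
  | 4 => 16 * (2 * x - 9) * (2 * x - 7) * (2 * x - 5) * (2 * x - 3) * x ^ 6
  | 5 => 32 * (2 * x - 9) * (2 * x - 7) * (2 * x - 5) * (2 * x - 3) * (2 * x - 1)

theorem cert_telescopes (n k x : R) (hx : x = n + 5 - k) :
    ∑ r : Fin 6, opCoeff r (n + (r : ℕ)) * rise r n * (2 * k - (n + (r : ℕ))) * shiftFactor r x =
      32 * (n + 1) ^ 4 *
        (k ^ 6 * (2 * x - 9) * certPoly.eval n k - (2 * k + 1) * x ^ 6 * certPoly.eval n (k + 1)) := by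
  have h := BiPoly.eval_eq_zero n k telescopingDefect_isZero
  have hn : (⟨[[0, 1]]⟩ : BiPoly).eval n k = n := by simp [BiPoly.eval, evalList]
  have hk : (⟨[[], [1]]⟩ : BiPoly).eval n k = k := by simp [BiPoly.eval, evalList]
  have h1 : ((1 : Fin 6) : ℕ) = 1 := rfl
  have h2 : ((2 : Fin 6) : ℕ) = 2 := rfl
  have h3 : ((3 : Fin 6) : ℕ) = 3 := rfl
  have h4 : ((4 : Fin 6) : ℕ) = 4 := rfl
  have h5 : ((5 : Fin 6) : ℕ) = 5 := rfl
  simp only [telescopingDefect, BiPoly.eval_add, BiPoly.eval_sub, BiPoly.eval_mul,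
    BiPoly.eval_neg, BiPoly.eval_pow, BiPoly.eval_ofNat, BiPoly.eval_one, BiPoly.eval_shift,
    hn, hk, ← hx] at h
  simp only [Fin.sum_univ_six, opCoeff, rise, shiftFactor, Fin.val_zero, h1, h2, h3, h4, h5,
    Nat.cast_zero, Nat.cast_one, Nat.cast_ofNat, add_zero]
  refine (eq_neg_of_add_eq_zero_left h).trans ?_
  ring

end identity

/-! ### Deformed hypergeometric weights -/

open DualNumber TrivSqZeroExt

theorem H_succ (m : ℕ) : H (m + 1) = H m + 1 / ((m : ℚ) + 1) := by
  simp [H, Finset.sum_range_succ]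

/-- The weight `(2m)! / m! ^ 7`. -/
def weight (m : ℕ) : ℚ := ((2 * m).factorial : ℚ) / (m.factorial : ℚ) ^ 7

theorem weight_succ (m : ℕ) :
    weight (m + 1) = 2 * (2 * m + 1) * weight m / ((m : ℚ) + 1) ^ 6 := by
  have hm : (m.factorial : ℚ) ≠ 0 := by positivity
  have hm' : (m : ℚ) + 1 ≠ 0 := by positivity
  rw [weight, weight, show 2 * (m + 1) = 2 * m + 1 + 1 by ring, Nat.factorial_succ,
    Nat.factorial_succ, Nat.factorial_succ]
  push_cast
  field_simp
  ring

/-- The first-order deformation of `weight` at `z + s ε`, extended by zero to negative `z`. -/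
def dualWeight (s : ℚ) : ℤ → ℚ[ε]
  | .ofNat m => inl (weight m) + inr (weight m * (s * (2 * H (2 * m) - 7 * H m)))
  | .negSucc _ => 0

/-- The point `z + s ε`. -/
def dualPoint (s : ℚ) (z : ℤ) : ℚ[ε] := inl (z : ℚ) + inr s

theorem dualWeight_natCast (s : ℚ) (m : ℕ) :
    dualWeight s m = inl (weight m) + inr (weight m * (s * (2 * H (2 * m) - 7 * H m))) := rfl

theorem dualWeight_of_neg (s : ℚ) {z : ℤ} (hz : z < 0) : dualWeight s z = 0 := by
  obtain ⟨m, rfl⟩ := Int.eq_negSucc_of_lt_zero hz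
  rfl

theorem dualPoint_add_one (s : ℚ) (z : ℤ) : dualPoint s (z + 1) = dualPoint s z + 1 := by
  ext <;> simp [dualPoint]

theorem dualPoint_zero_pow (s : ℚ) : dualPoint s 0 ^ 6 = 0 := by
  ext <;> simp [dualPoint, snd_pow]

theorem dualWeight_add_one (s : ℚ) (z : ℤ) :
    dualPoint s (z + 1) ^ 6 * dualWeight s (z + 1) =
      2 * (2 * dualPoint s z + 1) * dualWeight s z := by
  rcases lt_trichotomy z (-1) with hz | rfl | hz
  · rw [dualWeight_of_neg s (by omega), dualWeight_of_neg s (by omega), mul_zero, mul_zero]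
  · rw [dualWeight_of_neg s (by omega : (-1 : ℤ) < 0), neg_add_cancel, dualPoint_zero_pow,
      mul_zero, zero_mul]
  · obtain ⟨m, rfl⟩ := Int.eq_ofNat_of_zero_le (by omega : 0 ≤ z)
    have hm' : (m : ℚ) + 1 ≠ 0 := by positivity
    have hm'' : 2 * (m : ℚ) + 1 ≠ 0 := by positivity
    have hH : H (2 * (m + 1)) = H (2 * m) + 1 / (2 * (m : ℚ) + 1) + 1 / (2 * (m : ℚ) + 1 + 1) := by
      rw [show 2 * (m + 1) = 2 * m + 1 + 1 by ring, H_succ, H_succ]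
      push_cast
      ring
    rw [show ((m : ℤ) + 1) = ((m + 1 : ℕ) : ℤ) by push_cast; ring, dualWeight_natCast,
      dualWeight_natCast, weight_succ, hH, H_succ]
    have h2 : (2 : ℚ[ε]) = inl 2 := rfl
    ext
    · simp [dualPoint, h2]
      field_simp
    · simp [dualPoint, h2, snd_pow]
      field_simp
      ring

theorem dualWeight_sub_one (s : ℚ) (z : ℤ) :
    dualPoint s z ^ 6 * dualWeight s z =
      2 * (2 * dualPoint s z - 1) * dualWeight s (z - 1) := by
  have h := dualWeight_add_one s (z - 1)
  have hp := dualPoint_add_one s (z - 1)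
  rw [sub_add_cancel] at h hp
  rw [h, hp]
  ring

theorem isUnit_two_mul_dualPoint_sub (s : ℚ) (z : ℤ) (m : ℕ) (hm : Odd m) :
    IsUnit (2 * dualPoint s z - (m : ℚ[ε])) := by
  have h2 : (2 : ℚ[ε]) = inl 2 := rfl
  rw [isUnit_iff_isUnit_fst, isUnit_iff_ne_zero]
  simp only [dualPoint, h2, fst_sub, fst_mul, fst_inl, fst_add, fst_inr, add_zero, fst_natCast]
  obtain ⟨l, rfl⟩ := hm
  intro h
  have h' : 2 * z - (2 * (l : ℤ) + 1) = 0 := by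
    have : ((2 * z - (2 * (l : ℤ) + 1) : ℤ) : ℚ) = 0 := by
      push_cast
      push_cast at h
      linarith
    exact_mod_cast this
  omega

theorem isUnit_two_dualNumber : IsUnit (2 : ℚ[ε]) := by
  have h2 : (2 : ℚ[ε]) = inl 2 := rfl
  rw [isUnit_iff_isUnit_fst, isUnit_iff_ne_zero, h2]
  simp

theorem isUnit_shiftFactor_five (s : ℚ) (z : ℤ) : IsUnit (shiftFactor 5 (dualPoint s z)) := by
  have h (m : ℕ) (hm : Odd m) := isUnit_two_mul_dualPoint_sub s z m hm
  have h9 := h 9 (by decide)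
  have h7 := h 7 (by decide)
  have h5 := h 5 (by decide)
  have h3 := h 3 (by decide)
  have h1 := h 1 (by decide)
  push_cast at h9 h7 h5 h3 h1
  have h32 : IsUnit (32 : ℚ[ε]) := by
    rw [show (32 : ℚ[ε]) = 2 ^ 5 by norm_num]
    exact isUnit_two_dualNumber.pow 5
  exact ((((h32.mul h9).mul h7).mul h5).mul h3).mul h1

/-- The common factor of `dualWeight s (z - 5 + r)` for `r ≤ 5`. -/
def weightCore (s : ℚ) (z : ℤ) : ℚ[ε] :=
  dualWeight s z * Ring.inverse (shiftFactor 5 (dualPoint s z))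

theorem dualWeight_eq_core_mul (s : ℚ) (z : ℤ) (r : Fin 6) :
    dualWeight s (z - 5 + (r : ℕ)) = weightCore s z * shiftFactor r (dualPoint s z) := by
  have hu (l : ℕ) : IsUnit (2 * (2 * (dualPoint s z - l) - 1)) := by
    have h := isUnit_two_mul_dualPoint_sub s z (2 * l + 1) ⟨l, rfl⟩
    push_cast at h
    rw [show 2 * (2 * (dualPoint s z - l) - 1) = 2 * (2 * dualPoint s z - (2 * (l : ℚ[ε]) + 1)) by
      ring]
    exact isUnit_two_dualNumber.mul h
  have hp (l : ℕ) : dualPoint s (z - l) = dualPoint s z - l := by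
    ext <;> simp [dualPoint]
  have hw (l : ℕ) : (dualPoint s z - l) ^ 6 * dualWeight s (z - l) =
      2 * (2 * (dualPoint s z - l) - 1) * dualWeight s (z - (l + 1)) := by
    rw [← hp, dualWeight_sub_one, sub_sub]
  have e5 : dualWeight s z = weightCore s z * shiftFactor 5 (dualPoint s z) := by
    rw [weightCore, mul_assoc, Ring.inverse_mul_cancel _ (isUnit_shiftFactor_five s z), mul_one]
  have step (l : ℕ) (i j : Fin 6)
      (hi : dualWeight s (z - l) = weightCore s z * shiftFactor i (dualPoint s z))
      (hij : (dualPoint s z - l) ^ 6 * shiftFactor i (dualPoint s z) =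
        2 * (2 * (dualPoint s z - l) - 1) * shiftFactor j (dualPoint s z)) :
      dualWeight s (z - (l + 1 : ℕ)) = weightCore s z * shiftFactor j (dualPoint s z) := by
    apply (hu l).mul_left_cancel
    rw [Nat.cast_succ, ← hw, hi]
    linear_combination weightCore s z * hij
  have e4 := step 0 5 4 (by simpa using e5) (by simp only [shiftFactor]; push_cast; ring)
  have e3 := step 1 4 3 e4 (by simp only [shiftFactor]; push_cast; ring)
  have e2 := step 2 3 2 e3 (by simp only [shiftFactor]; push_cast; ring)
  have e1 := step 3 2 1 e2 (by simp only [shiftFactor]; push_cast; ring)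
  have e0 := step 4 1 0 e1 (by simp only [shiftFactor]; push_cast; ring)
  fin_cases r
  · exact (congrArg _ (by change z - 5 + 0 = z - 5; ring)).trans e0
  · exact (congrArg _ (by change z - 5 + 1 = z - 4; ring)).trans e1
  · exact (congrArg _ (by change z - 5 + 2 = z - 3; ring)).trans e2
  · exact (congrArg _ (by change z - 5 + 3 = z - 2; ring)).trans e3
  · exact (congrArg _ (by change z - 5 + 4 = z - 1; ring)).trans e4
  · exact (congrArg _ (by change z - 5 + 5 = z; ring)).trans e5

theorem weightCore_sub_one (s : ℚ) (z : ℤ) :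
    dualPoint s z ^ 6 * weightCore s z =
      2 * (2 * dualPoint s z - 11) * weightCore s (z - 1) := by
  have h4 := dualWeight_eq_core_mul s z 4
  have h5 := dualWeight_eq_core_mul s (z - 1) 5
  have hp := dualPoint_add_one s (z - 1)
  rw [sub_add_cancel] at hp
  have hp' : dualPoint s (z - 1) = dualPoint s z - 1 := by rw [hp]; ring
  rw [show z - 5 + ((4 : Fin 6) : ℕ) = z - 1 - 5 + ((5 : Fin 6) : ℕ) by
    change z - 5 + 4 = z - 1 - 5 + 5; ring, h5, hp'] at h4
  have h (m : ℕ) (hm : Odd m) := isUnit_two_mul_dualPoint_sub s z m hm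
  have h9 := h 9 (by decide)
  have h7 := h 7 (by decide)
  have h5 := h 5 (by decide)
  have h3 := h 3 (by decide)
  push_cast at h9 h7 h5 h3
  apply ((((isUnit_two_dualNumber.pow 4).mul h9).mul h7).mul h5 |>.mul h3).mul_left_cancel
  simp only [shiftFactor] at h4
  linear_combination -h4

theorem weightCore_of_neg (s : ℚ) {z : ℤ} (hz : z < 0) : weightCore s z = 0 := by
  rw [weightCore, dualWeight_of_neg s hz, zero_mul]

/-! ### The recurrence -/

/-- The deformed summand of `(-1) ^ d * a d / d ! ^ 5`, up to a factor `2`. -/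
def dualTerm (d k : ℕ) : ℚ[ε] :=
  (2 * dualPoint 1 k - d) * dualWeight 1 k * dualWeight (-1) ((d : ℤ) - k)

theorem sum_dualTerm (n : ℕ) :
    ∑ r : Fin 6, opCoeff r ((n : ℚ[ε]) + (r : ℕ)) * rise r (n : ℚ[ε]) *
      ∑ k ∈ Finset.range (n + 6), dualTerm (n + r) k = 0 := by
  let G (k : ℕ) : ℚ[ε] := 32 * ((n : ℚ[ε]) + 1) ^ 4 * (dualPoint 1 k ^ 6 *
    (2 * dualPoint (-1) ((n : ℤ) + 5 - k) - 9) * dualWeight 1 k *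
      weightCore (-1) ((n : ℤ) + 5 - k) * certPoly.eval (n : ℚ[ε]) (dualPoint 1 k))
  have hG (k : ℕ) : ∑ r : Fin 6, opCoeff r ((n : ℚ[ε]) + (r : ℕ)) * rise r (n : ℚ[ε]) *
      dualTerm (n + r) k = G k - G (k + 1) := by
    have hx : dualPoint (-1) ((n : ℤ) + 5 - k) = (n : ℚ[ε]) + 5 - dualPoint 1 k := by
      have h5 : (5 : ℚ[ε]) = inl 5 := rfl
      ext <;> simp [dualPoint, h5]
    have ht (r : Fin 6) : dualTerm (n + r) k = dualWeight 1 k *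
        weightCore (-1) ((n : ℤ) + 5 - k) * ((2 * dualPoint 1 k - ((n : ℚ[ε]) + (r : ℕ))) *
          shiftFactor r (dualPoint (-1) ((n : ℤ) + 5 - k))) := by
      rw [dualTerm, show (((n + r : ℕ) : ℤ) - k) = (n : ℤ) + 5 - k - 5 + (r : ℕ) by
        push_cast; ring, dualWeight_eq_core_mul]
      push_cast
      ring
    have hc := cert_telescopes (n : ℚ[ε]) (dualPoint 1 k) _ hx
    have hw := dualWeight_add_one 1 k
    have hv := weightCore_sub_one (-1) ((n : ℤ) + 5 - k)
    have hp : dualPoint (-1) ((n : ℤ) + 5 - k - 1) = dualPoint (-1) ((n : ℤ) + 5 - k) - 1 := by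
      ext <;> simp [dualPoint]
    have hs : ∑ r : Fin 6, opCoeff r ((n : ℚ[ε]) + (r : ℕ)) * rise r (n : ℚ[ε]) *
        dualTerm (n + r) k = dualWeight 1 k * weightCore (-1) ((n : ℤ) + 5 - k) *
          ∑ r : Fin 6, opCoeff r ((n : ℚ[ε]) + (r : ℕ)) * rise r (n : ℚ[ε]) *
            (2 * dualPoint 1 k - ((n : ℚ[ε]) + (r : ℕ))) *
              shiftFactor r (dualPoint (-1) ((n : ℤ) + 5 - k)) := by
      rw [Finset.mul_sum]
      refine Finset.sum_congr rfl fun r _ => ?_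
      rw [ht]
      ring
    have hG' : G (k + 1) = 32 * ((n : ℚ[ε]) + 1) ^ 4 * ((2 * dualPoint 1 k + 1) *
        dualPoint (-1) ((n : ℤ) + 5 - k) ^ 6 * dualWeight 1 k *
          weightCore (-1) ((n : ℤ) + 5 - k) * certPoly.eval (n : ℚ[ε]) (dualPoint 1 k + 1)) := by
      simp only [G]
      rw [show (((k + 1 : ℕ) : ℤ)) = (k : ℤ) + 1 by push_cast; ring, ← sub_sub, hp,
        ← dualPoint_add_one]
      linear_combination 32 * ((n : ℚ[ε]) + 1) ^ 4 * certPoly.eval (n : ℚ[ε]) (dualPoint 1 (k + 1)) *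
        ((2 * (dualPoint (-1) ((n : ℤ) + 5 - k) - 1) - 9) *
          weightCore (-1) ((n : ℤ) + 5 - k - 1) * hw - (2 * dualPoint 1 k + 1) *
          dualWeight 1 k * hv)
    rw [hs, hc, hG']
    simp only [G]
    ring
  simp only [Finset.mul_sum]
  rw [Finset.sum_comm, Finset.sum_congr rfl fun k _ => hG k, Finset.sum_range_sub']
  have h0 : G 0 = 0 := by
    simp only [G, Nat.cast_zero, dualPoint_zero_pow]
    ring
  have h1 : G (n + 6) = 0 := by
    simp only [G]
    rw [weightCore_of_neg]
    · ring
    · push_cast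
      omega
  rw [h0, h1, sub_zero]

theorem snd_sum_dualTerm {d M : ℕ} (hM : d < M) :
    (d.factorial : ℚ) ^ 5 * (∑ k ∈ Finset.range M, dualTerm d k).snd = 2 * ((-1) ^ d * a d) := by
  have hsub : ∑ k ∈ Finset.range M, dualTerm d k = ∑ k ∈ Finset.range (d + 1), dualTerm d k := by
    refine (Finset.sum_subset (Finset.range_subset_range.2 hM) fun k _ hk => ?_).symm
    rw [Finset.mem_range, not_lt] at hk
    rw [dualTerm, dualWeight_of_neg (-1) (by omega), mul_zero]
  have hsign : ((-1 : ℚ) ^ d) * (-1) ^ d = 1 := by rw [← mul_pow]; norm_num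
  rw [hsub, a, ← mul_assoc ((-1 : ℚ) ^ d), hsign, one_mul, snd_sum, Finset.mul_sum,
    Finset.mul_sum]
  refine Finset.sum_congr rfl fun k hk => ?_
  obtain ⟨m, rfl⟩ := Nat.exists_eq_add_of_le (Nat.lt_succ_iff.1 (Finset.mem_range.1 hk))
  have h2 : (2 : ℚ[ε]) = inl 2 := rfl
  rw [dualTerm, show ((k + m : ℕ) : ℤ) - k = (m : ℕ) by push_cast; ring, dualWeight_natCast,
    dualWeight_natCast, Nat.add_sub_cancel_left]
  simp [dualPoint, h2, weight]
  field_simp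
  ring

theorem map_opCoeff {R S : Type*} [CommRing R] [CommRing S] (f : R →+* S) (r : Fin 6) (t : R) :
    f (opCoeff r t) = opCoeff r (f t) := by
  fin_cases r <;> simp [opCoeff, map_ofNat]

theorem map_rise {R S : Type*} [CommRing R] [CommRing S] (f : R →+* S) (r : Fin 6) (n : R) :
    f (rise r n) = rise r (f n) := by
  fin_cases r <;> simp [rise, map_ofNat]

theorem recurrence (n : ℕ) :
    ∑ r : Fin 6, opCoeff r ((n : ℚ) + (r : ℕ)) * ((-1) ^ (r : ℕ) * a (n + r)) = 0 := by
  have hop (r : Fin 6) : opCoeff r ((n : ℚ[ε]) + (r : ℕ)) =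
      inlHom ℚ ℚ (opCoeff r ((n : ℚ) + (r : ℕ))) := by
    rw [map_opCoeff, map_add, map_natCast, map_natCast]
  have hrise (r : Fin 6) : rise r (n : ℚ[ε]) = inlHom ℚ ℚ (rise r (n : ℚ)) := by
    rw [map_rise, map_natCast]
  have hfac (r : Fin 6) : ((n + r).factorial : ℚ) ^ 5 = rise r (n : ℚ) * (n.factorial : ℚ) ^ 5 := by
    fin_cases r <;> simp [rise, Nat.factorial_succ] <;> ring
  have h := congrArg snd (sum_dualTerm n)
  rw [snd_sum, snd_zero] at h
  have hsum : ∑ r : Fin 6, opCoeff r ((n : ℚ) + (r : ℕ)) * ((-1) ^ (r : ℕ) * a (n + r)) *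
      (2 * (-1) ^ n) = 0 := by
    rw [← mul_zero ((n.factorial : ℚ) ^ 5), ← h, Finset.mul_sum]
    refine Finset.sum_congr rfl fun r _ => ?_
    have hs := snd_sum_dualTerm (d := n + r) (M := n + 6) (by omega)
    rw [hfac, pow_add] at hs
    rw [hop, hrise, ← map_mul]
    simp only [inlHom_apply, inl_mul_eq_smul, snd_smul, smul_eq_mul]
    linear_combination -opCoeff r ((n : ℚ) + (r : ℕ)) * hs
  rw [← Finset.sum_mul] at hsum
  exact (mul_eq_zero.1 hsum).resolve_right (by simp)

/-! ### The differential equation -/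

theorem coeff_th (f : PowerSeries ℚ) (d : ℕ) : coeff d (th f) = d * coeff d f := by
  simp [th]

theorem coeff_ofNat_mul (m : ℕ) [m.AtLeastTwo] (f : PowerSeries ℚ) (d : ℕ) :
    coeff d (ofNat(m) * f) = ofNat(m) * coeff d f := by
  rw [← map_ofNat (PowerSeries.C (R := ℚ)) m, coeff_C_mul]

theorem coeff_X_mul_eq_ite (f : PowerSeries ℚ) (d : ℕ) :
    coeff d (X * f) = if 1 ≤ d then coeff (d - 1) f else 0 := by
  simpa using coeff_X_pow_mul' f 1 d

theorem H_zero : H 0 = 0 := rfl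

theorem a_zero : a 0 = 1 := by
  norm_num [a, H_zero]

theorem a_one : a 1 = 4 := by
  norm_num [a, H, Finset.sum_range_succ, Nat.factorial]

theorem a_two : a 2 = 64 := by
  norm_num [a, H, Finset.sum_range_succ, Nat.factorial]

theorem a_three : a 3 = 1408 := by
  norm_num [a, H, Finset.sum_range_succ, Nat.factorial]

theorem a_four : a 4 = 37216 := by
  norm_num [a, H, Finset.sum_range_succ, Nat.factorial]

/-- `I₀ = Σ a_d q^d` (with `a₀ = 1`, `a₁ = 4`, `a₂ = 64`) is annihilated by
`49θ⁴ − 14q(134θ⁴+286θ³+234θ²+91θ+14) − 4q²(3183θ⁴+10266θ³+13501θ²+8225θ+1918)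
− 8q³(2588θ⁴+8400θ³+10256θ²+5649θ+1190) − 48q⁴(256θ⁴+848θ³+1141θ²+717θ+174)
− 2304q⁵(θ+1)⁴`. -/
theorem stmt_6 :
    a 0 = 1 ∧ a 1 = 4 ∧ a 2 = 64 ∧
    (∀ I₀ : PowerSeries ℚ, I₀ = PowerSeries.mk a →
      49 * th^[4] I₀ -
        14 * X * (134 * th^[4] I₀ + 286 * th^[3] I₀ + 234 * th^[2] I₀ + 91 * th I₀ + 14 * I₀) -
        4 * X ^ 2 * (3183 * th^[4] I₀ + 10266 * th^[3] I₀ + 13501 * th^[2] I₀ +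
          8225 * th I₀ + 1918 * I₀) -
        8 * X ^ 3 * (2588 * th^[4] I₀ + 8400 * th^[3] I₀ + 10256 * th^[2] I₀ +
          5649 * th I₀ + 1190 * I₀) -
        48 * X ^ 4 * (256 * th^[4] I₀ + 848 * th^[3] I₀ + 1141 * th^[2] I₀ +
          717 * th I₀ + 174 * I₀) -
        2304 * X ^ 5 * ((fun g => th g + g) ((fun g => th g + g) ((fun g => th g + g)
          ((fun g => th g + g) I₀)))) = 0) := by
  refine ⟨a_zero, a_one, a_two, ?_⟩
  rintro _ rfl
  ext d
  simp only [Function.iterate_succ, Function.iterate_zero, Function.comp_apply, id_eq, mul_assoc,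
    map_sub, map_add, coeff_ofNat_mul, coeff_X_pow_mul', coeff_X_mul_eq_ite, coeff_th, coeff_mk,
    map_zero]
  rcases d with _ | _ | _ | _ | _ | n
  · simp
  · norm_num [a_zero, a_one]
  · norm_num [a_zero, a_one, a_two]
  · norm_num [a_zero, a_one, a_two, a_three]
  · norm_num [a_zero, a_one, a_two, a_three, a_four]
  · have h := recurrence n
    simp only [Fin.sum_univ_six, opCoeff] at h
    norm_num [show n + 4 + 1 - 2 = n + 3 from rfl, show n + 4 + 1 - 3 = n + 2 from rfl,
      show n + 4 + 1 - 4 = n + 1 from rfl, show n + 1 + 1 + 1 + 1 + 1 - 5 = n from rfl] at h ⊢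
    linear_combination -h

end Stmt6
end
end
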